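/- arXiv:0705.1128 — 3 statements merged into one kernel-verified Lean document; each statement's English description precedes it below -/
import Mathlib

section
/- Let n ≥ 3 and R > 0, and let U be a bounded harmonic function on {x ∈ ℝⁿ : ‖x‖ > R}. Then there exist real constants a, b, and C such that |U(x) − a − b·‖x‖^{2-n}| ≤ C·‖x‖^{1-n} for all x with ‖x‖ ≥ 2R. -/
open Filter MeasureTheory

/-- A function is harmonic on an open subset of `ℝⁿ` if it is smooth there and its
Euclidean Laplacian (the sum of its pure second partial derivatives) vanishes
identically. -/
def HarmonicOnSet {n : ℕ} (f : EuclideanSpace ℝ (Fin n) → ℝ)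
    (Ω : Set (EuclideanSpace ℝ (Fin n))) : Prop :=
  ContDiffOn ℝ (⊤ : ℕ∞) f Ω ∧
    ∀ x ∈ Ω, ∑ i : Fin n,
      fderiv ℝ (fun y => fderiv ℝ f y (EuclideanSpace.single i (1:ℝ))) x
        (EuclideanSpace.single i (1:ℝ)) = 0

lemma ehe_exists_profile (d : ℝ) (hd : 1 < d) : ∃ g k k' : ℝ → ℝ,
    (∀ t, HasDerivAt g (k t) t) ∧ (∀ t, HasDerivAt k (k' t) t) ∧ Continuous k' ∧
    (∀ t, 1 ≤ t → g t = t ^ (1 - d)) ∧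
    (∀ t, 4 * t * k' t + 4 * d * k t ≤ 0) ∧
    (∃ t, 0 < t ∧ 4 * t * k' t + 4 * d * k t < 0) ∧
    (∀ t, 1 ≤ t → 4 * t * k' t + 4 * d * k t = 0) := by
  set χ : ℝ → ℝ := fun s => Real.smoothTransition (2 * s - 1) with hχ
  have χs : ContDiff ℝ 2 χ :=
    (Real.smoothTransition.contDiff (n := 2)).comp (by fun_prop)
  have χmono : Monotone χ := fun a b hab => Real.smoothTransition.monotone (by linarith)
  have χ0 : ∀ s, s ≤ 1 / 2 → χ s = 0 := fun s hs =>
    Real.smoothTransition.zero_of_nonpos (by linarith)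
  have χ1 : ∀ s, 1 ≤ s → χ s = 1 := fun s hs =>
    Real.smoothTransition.one_of_one_le (by linarith)
  have χd : ∀ s, HasDerivAt χ (deriv χ s) s := fun s =>
    (χs.differentiable (by norm_num) s).hasDerivAt
  have χdn : ∀ s, 0 ≤ deriv χ s := fun s => χmono.deriv_nonneg
  set k : ℝ → ℝ := fun s => -(d - 1) * χ s * s ^ (-d) with hk
  have ks : ContDiff ℝ 2 k := by
    rw [contDiff_iff_contDiffAt]
    intro s
    by_cases hs : s < 1 / 2
    · have : k =ᶠ[nhds s] fun _ => 0 := by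
        filter_upwards [Iio_mem_nhds hs] with u hu
        simp [hk, χ0 u (le_of_lt hu)]
      exact contDiffAt_const.congr_of_eventuallyEq this
    · have hs' : s ≠ 0 := by linarith
      exact (contDiffAt_const.mul χs.contDiffAt).mul
        (contDiffAt_id.rpow_const_of_ne hs')
  have kd : ∀ s, HasDerivAt k (deriv k s) s := fun s =>
    (ks.differentiable (by norm_num) s).hasDerivAt
  have kdc : Continuous (deriv k) := ks.continuous_deriv (by norm_num)
  have key : ∀ t, 4 * t * deriv k t + 4 * d * k t
      = if 0 < t then -(4 * (d - 1) * deriv χ t * t ^ (1 - d)) else 0 := by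
    intro t
    split_ifs with ht
    · have h1 : HasDerivAt k _ t :=
        ((χd t).const_mul (-(d - 1))).mul ((hasDerivAt_id t).rpow_const (p := -d) (Or.inl ht.ne'))
      rw [h1.deriv]
      have e1 : t ^ (-d - 1) = t ^ (-d) / t := by rw [Real.rpow_sub ht, Real.rpow_one]
      have e2 : t ^ (1 - d) = t * t ^ (-d) := by
        rw [sub_eq_add_neg, Real.rpow_add ht, Real.rpow_one]
      simp only [hk, id, e1, e2]
      field_simp
      ring
    · have : k =ᶠ[nhds t] fun _ => 0 := by
        filter_upwards [Iio_mem_nhds (show t < 1 / 2 by linarith)] with u hu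
        simp [hk, χ0 u (le_of_lt hu)]
      rw [this.deriv_eq, this.eq_of_nhds]
      simp
  refine ⟨fun t => 1 + ∫ s in (1:ℝ)..t, k s, k, deriv k, ?_, kd, kdc, ?_, ?_, ?_, ?_⟩
  · intro t
    have := intervalIntegral.integral_hasDerivAt_right (a := 1) (b := t)
      (ks.continuous.intervalIntegrable _ _)
      (ks.continuous.stronglyMeasurableAtFilter _ _) ks.continuous.continuousAt
    exact this.const_add 1
  · intro t ht
    have : ∫ s in (1:ℝ)..t, k s = t ^ (1 - d) - 1 ^ (1 - d) := by
      apply intervalIntegral.integral_eq_sub_of_hasDerivAt (f := fun s => s ^ (1 - d))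
      · intro s hs
        rw [Set.uIcc_of_le ht] at hs
        have hs0 : s ≠ 0 := by linarith [hs.1]
        have := (hasDerivAt_id s).rpow_const (p := 1 - d) (Or.inl hs0)
        have e : k s = 1 * (1 - d) * id s ^ (1 - d - 1) := by
          simp only [hk, χ1 s hs.1, id]
          rw [show 1 - d - 1 = -d by ring]
          ring
        rw [e]
        exact this
      · exact ks.continuous.intervalIntegrable _ _
    simp only [this, Real.one_rpow]
    ring
  · intro t
    rw [key]
    split_ifs with ht
    · have := χdn t
      have : 0 ≤ d - 1 := by linarith
      have : 0 ≤ 4 * (d - 1) * deriv χ t * t ^ (1 - d) := by positivity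
      linarith
    · exact le_rfl
  · obtain ⟨t, ht, he⟩ := exists_deriv_eq_slope χ (show (1/2:ℝ) < 1 by norm_num)
      χs.continuous.continuousOn (χs.differentiable (by norm_num)).differentiableOn
    rw [χ1 1 le_rfl, χ0 (1/2) le_rfl] at he
    have ht0 : 0 < t := by linarith [ht.1]
    refine ⟨t, ht0, ?_⟩
    rw [key, if_pos ht0, he]
    have : 0 < d - 1 := by linarith
    have : 0 < 4 * (d - 1) * ((1 - 0) / (1 - 1/2)) * t ^ (1 - d) := by
      have := Real.rpow_pos_of_pos ht0 (1 - d)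
      norm_num
      positivity
    linarith
  · intro t ht
    have hE : ∀ s, 1 < s → 4 * s * deriv k s + 4 * d * k s = 0 := by
      intro s hs
      have : χ =ᶠ[nhds s] fun _ => 1 := by
        filter_upwards [Ioi_mem_nhds hs] with u hu
        exact χ1 u (le_of_lt hu)
      rw [key, this.deriv_eq]
      simp
    have hc : Continuous fun s => 4 * s * deriv k s + 4 * d * k s := by
      have := ks.continuous
      fun_prop
    have hcl : IsClosed {s | 4 * s * deriv k s + 4 * d * k s = 0} :=
      isClosed_eq hc continuous_const
    have : closure (Set.Ioi (1:ℝ)) ⊆ {s | 4 * s * deriv k s + 4 * d * k s = 0} :=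
      hcl.closure_subset_iff.2 hE
    rw [closure_Ioi] at this
    exact this ht

/-- coordinate Laplacian -/
noncomputable def eheLap {n : ℕ} (f : EuclideanSpace ℝ (Fin n) → ℝ)
    (x : EuclideanSpace ℝ (Fin n)) : ℝ :=
  ∑ i : Fin n,
      fderiv ℝ (fun y => fderiv ℝ f y (EuclideanSpace.single i (1:ℝ))) x
        (EuclideanSpace.single i (1:ℝ))

lemma ehe_lap_radial {n : ℕ} {h h' h'' : ℝ → ℝ} (h1 : ∀ t, HasDerivAt h (h' t) t)
    (h2 : ∀ t, HasDerivAt h' (h'' t) t) (x y : EuclideanSpace ℝ (Fin n)) :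
    eheLap (fun w => h (‖w - x‖ ^ 2)) y
      = 4 * ‖y - x‖ ^ 2 * h'' (‖y - x‖ ^ 2) + 2 * n * h' (‖y - x‖ ^ 2) := by
  have hN : ∀ w : EuclideanSpace ℝ (Fin n), HasFDerivAt (fun w => ‖w - x‖ ^ 2)
      (2 • (innerSL ℝ (w - x))) w := by
    intro w
    simpa using ((hasFDerivAt_id w).sub_const x).norm_sq
  have hG : ∀ w, HasFDerivAt (fun w => h (‖w - x‖ ^ 2))
      (h' (‖w - x‖ ^ 2) • (2 • (innerSL ℝ (w - x)))) w :=
    fun w => (h1 _).comp_hasFDerivAt w (hN w)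
  have hG1 : ∀ i : Fin n, (fun w => fderiv ℝ (fun w => h (‖w - x‖ ^ 2)) w
      (EuclideanSpace.single i (1:ℝ))) = fun w => h' (‖w - x‖ ^ 2) * (2 * (w i - x i)) := by
    intro i
    funext w
    rw [(hG w).fderiv]
    simp [EuclideanSpace.inner_single_right]
  have hco : ∀ i : Fin n, HasFDerivAt (fun w : EuclideanSpace ℝ (Fin n) => 2 * (w i - x i))
      ((2:ℝ) • (EuclideanSpace.proj i : EuclideanSpace ℝ (Fin n) →L[ℝ] ℝ)) y := by
    intro i
    exact ((EuclideanSpace.proj i : EuclideanSpace ℝ (Fin n) →L[ℝ] ℝ).hasFDerivAt.sub_const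
      (x i)).const_mul 2
  have hG2 : ∀ i : Fin n, fderiv ℝ (fun w : EuclideanSpace ℝ (Fin n) =>
      h' (‖w - x‖ ^ 2) * (2 * (w i - x i))) y (EuclideanSpace.single i (1:ℝ))
      = 4 * (y i - x i) ^ 2 * h'' (‖y - x‖ ^ 2) + 2 * h' (‖y - x‖ ^ 2) := by
    intro i
    have := (((h2 _).comp_hasFDerivAt y (hN y)).mul (hco i)).fderiv
    simp only [Function.comp_def] at this
    rw [show (fun w : EuclideanSpace ℝ (Fin n) =>
      h' (‖w - x‖ ^ 2) * (2 * (w i - x i))) = (fun w : EuclideanSpace ℝ (Fin n) =>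
      h' (‖w - x‖ ^ 2)) * (fun w => 2 * (w i - x i)) from rfl, this]
    simp [EuclideanSpace.inner_single_right]
    ring
  unfold eheLap
  simp_rw [hG1, hG2]
  rw [Finset.sum_add_distrib, ← Finset.sum_mul, ← Finset.mul_sum]
  rw [EuclideanSpace.norm_sq_eq]
  simp
  ring

lemma ehe_green {n : ℕ} {G v : EuclideanSpace ℝ (Fin n) → ℝ} (hG : ContDiff ℝ 2 G)
    (hv : ContDiff ℝ 2 v) (hc : HasCompactSupport G) :
    ∫ y, G y * eheLap v y = ∫ y, eheLap G y * v y := by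
  have D1 : ∀ {f : EuclideanSpace ℝ (Fin n) → ℝ} (_ : ContDiff ℝ 2 f) (i : Fin n),
      ContDiff ℝ 1 (fun y => fderiv ℝ f y (EuclideanSpace.single i (1:ℝ))) := by
    intro f hf i
    exact (hf.fderiv_right (by norm_num)).clm_apply contDiff_const
  have D2 : ∀ {f : EuclideanSpace ℝ (Fin n) → ℝ} (_ : ContDiff ℝ 1 f) (i : Fin n),
      Continuous (fun y => fderiv ℝ f y (EuclideanSpace.single i (1:ℝ))) := by
    intro f hf i
    exact (hf.continuous_fderiv (by norm_num)).clm_apply continuous_const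
  have cG1 : ∀ i : Fin n,
      HasCompactSupport (fun y => fderiv ℝ G y (EuclideanSpace.single i (1:ℝ))) :=
    fun i => hc.fderiv_apply ℝ _
  have cG2 : ∀ i : Fin n, HasCompactSupport (fun z => fderiv ℝ (fun y => fderiv ℝ G y
      (EuclideanSpace.single i (1:ℝ))) z (EuclideanSpace.single i (1:ℝ))) :=
    fun i => (cG1 i).fderiv_apply ℝ _
  have I : ∀ {a b : EuclideanSpace ℝ (Fin n) → ℝ}, Continuous a → Continuous b →
      HasCompactSupport a → Integrable (fun y => a y * b y) := by
    intro a b ha hb hab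
    exact (ha.mul hb).integrable_of_hasCompactSupport hab.mul_right
  unfold eheLap
  simp_rw [Finset.mul_sum, Finset.sum_mul]
  rw [integral_finsetSum, integral_finsetSum]
  · refine Finset.sum_congr rfl fun i _ => ?_
    rw [integral_mul_fderiv_eq_neg_fderiv_mul_of_integrable,
      integral_mul_fderiv_eq_neg_fderiv_mul_of_integrable, neg_neg]
    · exact I (D2 (D1 hG i) i) hv.continuous (cG2 i)
    · exact I (D1 hG i).continuous (D1 hv i).continuous (cG1 i)
    · exact I (D1 hG i).continuous hv.continuous (cG1 i)
    · exact fun x _ => (D1 hG i).differentiable (by norm_num) x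
    · exact fun x _ => hv.differentiable (by norm_num) x
    · exact I (D1 hG i).continuous (D1 hv i).continuous (cG1 i)
    · exact I hG.continuous (D2 (D1 hv i) i) hc
    · exact I hG.continuous (D1 hv i).continuous hc
    · exact fun x _ => hG.differentiable (by norm_num) x
    · exact fun x _ => (D1 hv i).differentiable (by norm_num) x
  · exact fun i _ => I (D2 (D1 hG i) i) hv.continuous (cG2 i)
  · exact fun i _ => I hG.continuous (D2 (D1 hv i) i) hc

lemma ehe_contDiff_two {g k k' : ℝ → ℝ} (h1 : ∀ t, HasDerivAt g (k t) t)
    (h2 : ∀ t, HasDerivAt k (k' t) t) (hc : Continuous k') : ContDiff ℝ 2 g := by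
  have e1 : deriv g = k := funext fun t => (h1 t).deriv
  have e2 : deriv k = k' := funext fun t => (h2 t).deriv
  have hk : ContDiff ℝ 1 k := by
    rw [contDiff_one_iff_deriv, e2]
    exact ⟨fun t => (h2 t).differentiableAt, hc⟩
  rw [show (2 : WithTop ℕ∞) = 1 + 1 by norm_num, contDiff_succ_iff_deriv, e1]
  exact ⟨fun t => (h1 t).differentiableAt, by simp, hk⟩

lemma ehe_profile_scale {n : ℕ} {g : ℝ → ℝ}
    (hg : ∀ t, 1 ≤ t → g t = t ^ (1 - (n:ℝ) / 2)) {e s : ℝ} (he : 0 < e) (hs : e ^ 2 ≤ s) :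
    e ^ 2 * (e ^ n)⁻¹ * g (s / e ^ 2) = s ^ (1 - (n:ℝ) / 2) := by
  have he2 : 0 < e ^ 2 := by positivity
  rw [hg _ ((one_le_div he2).2 hs), Real.div_rpow (by linarith) he2.le]
  have : (e ^ 2) ^ (1 - (n:ℝ) / 2) = e ^ 2 * (e ^ n)⁻¹ := by
    rw [Real.rpow_sub he2, Real.rpow_one, ← Real.rpow_natCast e 2, ← Real.rpow_mul he.le]
    rw [show ((2:ℕ):ℝ) * ((n:ℝ) / 2) = n by push_cast; ring, Real.rpow_natCast e n]
    rfl
  rw [this]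
  have : e ^ 2 * (e ^ n)⁻¹ ≠ 0 := by positivity
  field_simp

lemma ehe_change {n : ℕ} (P v : EuclideanSpace ℝ (Fin n) → ℝ) (x : EuclideanSpace ℝ (Fin n))
    {e : ℝ} (he : 0 < e) :
    ∫ z, P z * v (x + e • z) = ∫ y, (e ^ n)⁻¹ * P (e⁻¹ • (y - x)) * v y := by
  have h1 := Measure.integral_comp_smul_of_nonneg (volume : Measure (EuclideanSpace ℝ (Fin n)))
    (fun y => P (e⁻¹ • y) * v (x + y)) e (hR := he.le)
  have h2 := integral_sub_right_eq_self (μ := (volume : Measure (EuclideanSpace ℝ (Fin n))))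
    (fun y => P (e⁻¹ • y) * v (x + y)) x
  simp only [smul_smul, inv_mul_cancel₀ he.ne', one_smul, finrank_euclideanSpace,
    Fintype.card_fin, smul_eq_mul, add_sub_cancel] at h1 h2
  rw [h1, ← h2, ← integral_const_mul]
  simp only [mul_assoc]

lemma ehe_core {n : ℕ} {g k k' : ℝ → ℝ} (h1 : ∀ t, HasDerivAt g (k t) t)
    (h2 : ∀ t, HasDerivAt k (k' t) t) (hc : Continuous k')
    (hg : ∀ t, 1 ≤ t → g t = t ^ (1 - (n:ℝ) / 2))
    {P : EuclideanSpace ℝ (Fin n) → ℝ}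
    (hP : ∀ z, P z = 4 * ‖z‖ ^ 2 * k' (‖z‖ ^ 2) + 2 * n * k (‖z‖ ^ 2))
    (Pcont : Continuous P) (Pcs : HasCompactSupport P)
    {v : EuclideanSpace ℝ (Fin n) → ℝ} (hv : ContDiff ℝ 2 v) (x : EuclideanSpace ℝ (Fin n))
    {e T : ℝ} (he : 0 < e) (hT : 0 < T) :
    ∫ y, (e ^ 2 * (e ^ n)⁻¹ * g (‖y - x‖ ^ 2 / e ^ 2)
        - T ^ 2 * (T ^ n)⁻¹ * g (‖y - x‖ ^ 2 / T ^ 2)) * eheLap v y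
      = (∫ z, P z * v (x + e • z)) - ∫ z, P z * v (x + T • z) := by
  set h : ℝ → ℝ := fun s => e ^ 2 * (e ^ n)⁻¹ * g (s / e ^ 2) - T ^ 2 * (T ^ n)⁻¹ * g (s / T ^ 2)
    with hh
  set h' : ℝ → ℝ := fun s => (e ^ n)⁻¹ * k (s / e ^ 2) - (T ^ n)⁻¹ * k (s / T ^ 2) with hh'
  set h'' : ℝ → ℝ := fun s => (e ^ n)⁻¹ * (e ^ 2)⁻¹ * k' (s / e ^ 2)
    - (T ^ n)⁻¹ * (T ^ 2)⁻¹ * k' (s / T ^ 2) with hh''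
  have sc : ∀ {a b : ℝ → ℝ} (_ : ∀ t, HasDerivAt a (b t) t) (c r s : ℝ),
      HasDerivAt (fun s => c * a (s / r)) (c * (b (s / r) * (1 / r))) s := by
    intro a b hab c r s
    exact ((hab (s / r)).comp s ((hasDerivAt_id s).div_const r)).const_mul c
  have d1 : ∀ t, HasDerivAt h (h' t) t := by
    intro t
    have := (sc h1 (e ^ 2 * (e ^ n)⁻¹) (e ^ 2) t).sub (sc h1 (T ^ 2 * (T ^ n)⁻¹) (T ^ 2) t)
    refine this.congr_deriv ?_
    simp only [hh']
    field_simp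
  have d2 : ∀ t, HasDerivAt h' (h'' t) t := by
    intro t
    have := (sc h2 ((e ^ n)⁻¹) (e ^ 2) t).sub (sc h2 ((T ^ n)⁻¹) (T ^ 2) t)
    refine this.congr_deriv ?_
    simp only [hh'']
    field_simp
  have c2 : Continuous h'' := by
    simp only [hh'']
    fun_prop
  have hC : ContDiff ℝ 2 (fun y : EuclideanSpace ℝ (Fin n) => h (‖y - x‖ ^ 2)) :=
    (ehe_contDiff_two d1 d2 c2).comp ((contDiff_id.sub contDiff_const).norm_sq ℝ)
  have hS : HasCompactSupport (fun y : EuclideanSpace ℝ (Fin n) => h (‖y - x‖ ^ 2)) := by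
    apply HasCompactSupport.intro (isCompact_closedBall x (max e T))
    intro y hy
    rw [Metric.mem_closedBall, dist_eq_norm, not_le] at hy
    simp only [hh]
    have := le_max_left e T
    have := le_max_right e T
    rw [ehe_profile_scale hg he (by gcongr; linarith),
      ehe_profile_scale hg hT (by gcongr; linarith), sub_self]
  have G := ehe_green hC hv hS
  have L : ∀ y, eheLap (fun y => h (‖y - x‖ ^ 2)) y =
      (e ^ n)⁻¹ * P (e⁻¹ • (y - x)) - (T ^ n)⁻¹ * P (T⁻¹ • (y - x)) := by
    intro y
    rw [ehe_lap_radial d1 d2, hP, hP]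
    simp only [norm_smul, mul_pow, norm_inv, Real.norm_eq_abs, inv_pow, sq_abs, hh', hh'']
    rw [inv_mul_eq_div, inv_mul_eq_div]
    ring_nf
  rw [ehe_change P v x he, ehe_change P v x hT, G, ← integral_sub]
  · simp only [L, sub_mul]
  · apply Continuous.integrable_of_hasCompactSupport
    · have := hv.continuous
      fun_prop
    · apply HasCompactSupport.mul_right
      apply HasCompactSupport.mul_left
      exact Pcs.comp_homeomorph ((Homeomorph.subRight x).trans (Homeomorph.smulOfNeZero _ (inv_ne_zero he.ne')))
  · apply Continuous.integrable_of_hasCompactSupport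
    · have := hv.continuous
      fun_prop
    · apply HasCompactSupport.mul_right
      apply HasCompactSupport.mul_left
      exact Pcs.comp_homeomorph ((Homeomorph.subRight x).trans (Homeomorph.smulOfNeZero _ (inv_ne_zero hT.ne')))

lemma ehe_lim_zero {n : ℕ} {P v : EuclideanSpace ℝ (Fin n) → ℝ}
    (Pcont : Continuous P) (Pcs : HasCompactSupport P) (hv : Continuous v) {M : ℝ}
    (hM : ∀ y, |v y| ≤ M) (x : EuclideanSpace ℝ (Fin n)) :
    Tendsto (fun e : ℝ => ∫ z, P z * v (x + e • z)) (nhdsWithin 0 (Set.Ioi 0))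
      (nhds ((∫ z, P z) * v x)) := by
  rw [← integral_mul_const]
  apply tendsto_integral_filter_of_dominated_convergence (fun z => |P z| * M)
  · exact Eventually.of_forall fun e => by
      apply Continuous.aestronglyMeasurable
      fun_prop
  · refine Eventually.of_forall fun e => Eventually.of_forall fun z => ?_
    rw [Real.norm_eq_abs, abs_mul]
    gcongr
    exact hM _
  · exact (Pcont.integrable_of_hasCompactSupport Pcs).abs.mul_const M
  · refine Eventually.of_forall fun z => ?_
    have : Continuous fun e : ℝ => P z * v (x + e • z) := by fun_prop
    have := this.tendsto 0
    simp only [zero_smul, add_zero] at this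
    exact this.mono_left nhdsWithin_le_nhds

lemma ehe_lim_top {n : ℕ} {P v : EuclideanSpace ℝ (Fin n) → ℝ}
    (Pcont : Continuous P) (Pcs : HasCompactSupport P) (P0 : ∀ z, 1 < ‖z‖ → P z = 0)
    (hv : Continuous v) {M : ℝ}
    (hM : ∀ y, |v y| ≤ M) (x x0 : EuclideanSpace ℝ (Fin n)) :
    Tendsto (fun T : ℝ => (∫ z, P z * v (x + T • z)) - ∫ z, P z * v (x0 + T • z)) atTop
      (nhds 0) := by
  obtain ⟨B, hB⟩ := Pcont.bounded_above_of_compact_support Pcs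
  have M0 : 0 ≤ M := (abs_nonneg _).trans (hM 0)
  have tr : ∀ (T : ℝ) (_ : 0 < T) (w : EuclideanSpace ℝ (Fin n)),
      ∫ z, P z * v (w + T • z) = ∫ z, P (z - T⁻¹ • w) * v (T • z) := by
    intro T hT w
    rw [← integral_sub_right_eq_self (fun z => P z * v (w + T • z)) (T⁻¹ • w)]
    simp [smul_sub, smul_smul, hT.ne']
  have ig : ∀ (T : ℝ) (w : EuclideanSpace ℝ (Fin n)),
      Integrable fun z => P (z - T⁻¹ • w) * v (T • z) := by
    intro T w
    apply Continuous.integrable_of_hasCompactSupport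
    · fun_prop
    · apply HasCompactSupport.mul_right
      exact Pcs.comp_homeomorph (Homeomorph.subRight _)
  have main : Tendsto (fun T : ℝ => ∫ z, (P (z - T⁻¹ • x) - P (z - T⁻¹ • x0)) * v (T • z)) atTop
      (nhds (∫ _ : EuclideanSpace ℝ (Fin n), (0:ℝ))) := by
    apply tendsto_integral_filter_of_dominated_convergence
      ((Metric.closedBall 0 2).indicator fun _ => (B + B) * M)
    · exact Eventually.of_forall fun e => by
        apply Continuous.aestronglyMeasurable
        fun_prop
    · filter_upwards [eventually_ge_atTop (‖x‖ + ‖x0‖ + 1)] with T hT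
      refine Eventually.of_forall fun z => ?_
      have T0 : 0 < T := by linarith [norm_nonneg x, norm_nonneg x0]
      by_cases hz : z ∈ Metric.closedBall (0 : EuclideanSpace ℝ (Fin n)) 2
      · rw [Set.indicator_of_mem hz, norm_mul]
        have := norm_sub_le (P (z - T⁻¹ • x)) (P (z - T⁻¹ • x0))
        have := hB (z - T⁻¹ • x)
        have := hB (z - T⁻¹ • x0)
        have := hM (T • z)
        rw [← Real.norm_eq_abs] at this
        have : 0 ≤ B := (norm_nonneg _).trans (hB 0)
        gcongr
        linarith
      · rw [Set.indicator_of_notMem hz]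
        rw [mem_closedBall_zero_iff, not_le] at hz
        have sm : ∀ w : EuclideanSpace ℝ (Fin n), ‖w‖ ≤ T → P (z - T⁻¹ • w) = 0 := by
          intro w hw
          apply P0
          have e1 := norm_sub_norm_le z (T⁻¹ • w)
          have e2 : ‖T⁻¹ • w‖ ≤ 1 := by
            rw [norm_smul, norm_inv, Real.norm_eq_abs, abs_of_pos T0, inv_mul_le_iff₀ T0]
            linarith
          linarith
        rw [sm x (by linarith [norm_nonneg x0]), sm x0 (by linarith [norm_nonneg x])]
        simp
    · rw [integrable_indicator_iff Metric.isClosed_closedBall.measurableSet]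
      exact integrableOn_const (isCompact_closedBall _ _).measure_lt_top.ne
    · refine Eventually.of_forall fun z => ?_
      have t1 : ∀ w : EuclideanSpace ℝ (Fin n),
          Tendsto (fun T : ℝ => P (z - T⁻¹ • w)) atTop (nhds (P z)) := by
        intro w
        have : Continuous fun s : ℝ => P (z - s • w) := by fun_prop
        have := (this.tendsto 0).comp tendsto_inv_atTop_zero
        simpa [Function.comp_def] using this
      have t2 := ((t1 x).sub (t1 x0)).abs.mul_const M
      simp only [sub_self, abs_zero, zero_mul] at t2
      apply squeeze_zero_norm _ t2
      intro T
      rw [norm_mul, Real.norm_eq_abs, Real.norm_eq_abs]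
      gcongr
      exact hM _
  rw [integral_zero] at main
  refine main.congr' ?_
  filter_upwards [eventually_gt_atTop 0] with T hT
  rw [tr T hT, tr T hT, ← integral_sub (ig T x) (ig T x0)]
  simp only [sub_mul]

lemma ehe_far {n : ℕ} (hn : 3 ≤ n) {g : ℝ → ℝ} (gc : Continuous g)
    (hg : ∀ t, 1 ≤ t → g t = t ^ (1 - (n:ℝ) / 2)) (f : EuclideanSpace ℝ (Fin n) → ℝ)
    (fi : Integrable f) (x : EuclideanSpace ℝ (Fin n)) :
    Tendsto (fun T : ℝ => ∫ y, T ^ 2 * (T ^ n)⁻¹ * g (‖y - x‖ ^ 2 / T ^ 2) * f y) atTop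
      (nhds 0) := by
  obtain ⟨B, hB⟩ := (isCompact_Icc (a := (0:ℝ)) (b := 1)).exists_bound_of_continuousOn
    gc.continuousOn
  have hb : ∀ t, 0 ≤ t → |g t| ≤ max B 1 := by
    intro t ht
    by_cases h : t ≤ 1
    · exact (hB t ⟨ht, h⟩).trans (le_max_left _ _)
    · rw [not_le] at h
      rw [hg t h.le, abs_of_nonneg (by positivity)]
      refine le_trans ?_ (le_max_right _ _)
      apply Real.rpow_le_one_of_one_le_of_nonpos h.le
      have : (3:ℝ) ≤ n := by exact_mod_cast hn
      linarith
  have lim : Tendsto (fun T : ℝ => T⁻¹ * (max B 1 * ∫ y, |f y|)) atTop (nhds 0) := by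
    simpa using tendsto_inv_atTop_zero.mul_const (max B 1 * ∫ y, |f y|)
  apply squeeze_zero_norm' _ lim
  filter_upwards [eventually_ge_atTop 1] with T hT
  have T0 : 0 < T := by linarith
  rw [← integral_const_mul, ← integral_const_mul]
  apply norm_integral_le_of_norm_le
  · exact (fi.abs.const_mul _).const_mul _
  · refine Eventually.of_forall fun y => ?_
    rw [norm_mul, norm_mul, mul_assoc]
    have : ‖T ^ 2 * (T ^ n)⁻¹‖ ≤ T⁻¹ := by
      rw [Real.norm_eq_abs, abs_of_nonneg (by positivity)]
      rw [← div_eq_mul_inv, div_le_iff₀ (by positivity)]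
      obtain ⟨m, rfl⟩ := Nat.exists_eq_add_of_le hn
      have : 1 ≤ T ^ m := one_le_pow₀ hT
      have e : T⁻¹ * T ^ (3 + m) = T ^ 2 * T ^ m := by
        rw [pow_add]
        field_simp
      rw [e]
      nlinarith [sq_nonneg T]
    have := hb (‖y - x‖ ^ 2 / T ^ 2) (by positivity)
    rw [← Real.norm_eq_abs] at this
    rw [← Real.norm_eq_abs]
    gcongr

/-- Representation of a bounded function with compactly supported Laplacian. -/
lemma ehe_representation {n : ℕ} (hn : 3 ≤ n) {v : EuclideanSpace ℝ (Fin n) → ℝ}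
    (hv : ContDiff ℝ 2 v) {M : ℝ} (hM : ∀ y, |v y| ≤ M) (fc : Continuous (eheLap v))
    (fs : HasCompactSupport (eheLap v)) (S : Set (EuclideanSpace ℝ (Fin n)))
    (hS : ∀ x ∈ S, ∃ e : ℝ, 0 < e ∧ ∀ y, eheLap v y ≠ 0 → e ≤ ‖y - x‖) :
    ∃ a c : ℝ, ∀ x ∈ S, v x = a + c * ∫ y, (‖y - x‖ ^ 2) ^ (1 - (n:ℝ) / 2) * eheLap v y := by
  have hn' : (3:ℝ) ≤ n := by exact_mod_cast hn
  obtain ⟨g, k, k', h1, h2, hc, hg, hle, ⟨t, ht, htn⟩, h0⟩ :=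
    ehe_exists_profile ((n:ℝ) / 2) (by linarith)
  have gc : Continuous g := continuous_iff_continuousAt.2 fun t => (h1 t).continuousAt
  have kc : Continuous k := continuous_iff_continuousAt.2 fun t => (h2 t).continuousAt
  rcases S.eq_empty_or_nonempty with rfl | ⟨x0, hx0⟩
  · exact ⟨0, 0, fun x hx => absurd hx (by simp)⟩
  set P : EuclideanSpace ℝ (Fin n) → ℝ :=
    fun z => 4 * ‖z‖ ^ 2 * k' (‖z‖ ^ 2) + 2 * n * k (‖z‖ ^ 2) with hP
  have hP' : ∀ z, P z = 4 * ‖z‖ ^ 2 * k' (‖z‖ ^ 2) + 4 * ((n:ℝ) / 2) * k (‖z‖ ^ 2) := by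
    intro z
    simp only [hP]
    ring
  have Pcont : Continuous P := by
    simp only [hP]
    fun_prop
  have P0 : ∀ z, 1 < ‖z‖ → P z = 0 := by
    intro z hz
    rw [hP']
    exact h0 _ (by nlinarith)
  have Pcs : HasCompactSupport P := by
    apply HasCompactSupport.intro (isCompact_closedBall 0 1)
    intro z hz
    rw [mem_closedBall_zero_iff, not_le] at hz
    exact P0 z hz
  have cneg : 0 < ∫ z, -P z := by
    apply Continuous.integral_pos_of_hasCompactSupport_nonneg_nonzero
      (x := EuclideanSpace.single (⟨0, by omega⟩ : Fin n) (Real.sqrt t)) Pcont.neg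
    · simpa [HasCompactSupport, tsupport, Function.support_fun_neg] using Pcs
    · intro z
      have := hle (‖z‖ ^ 2)
      rw [← hP'] at this
      simpa using this
    · rw [Pi.neg_apply, hP']
      simp only [PiLp.norm_single, Real.norm_eq_abs, sq_abs, Real.sq_sqrt ht.le]
      linarith
  rw [integral_neg] at cneg
  set c := ∫ z, P z with hcdef
  have c0 : c ≠ 0 := by linarith
  have fi : Integrable (eheLap v) := fc.integrable_of_hasCompactSupport fs
  set N : EuclideanSpace ℝ (Fin n) → ℝ :=
    fun x => ∫ y, (‖y - x‖ ^ 2) ^ (1 - (n:ℝ) / 2) * eheLap v y with hN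
  have step : ∀ x ∈ S, ∀ T : ℝ, 0 < T →
      c * v x - N x = (∫ z, P z * v (x + T • z))
        - ∫ y, T ^ 2 * (T ^ n)⁻¹ * g (‖y - x‖ ^ 2 / T ^ 2) * eheLap v y := by
    intro x hx T hT
    obtain ⟨e0, he0, hsup⟩ := hS x hx
    have ig : ∀ r : ℝ, Integrable
        fun y => r ^ 2 * (r ^ n)⁻¹ * g (‖y - x‖ ^ 2 / r ^ 2) * eheLap v y := by
      intro r
      apply Continuous.integrable_of_hasCompactSupport
      · fun_prop
      · exact fs.mul_left
    have E : ∀ e : ℝ, 0 < e → e ≤ e0 → ∫ z, P z * v (x + e • z) = N x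
        - (∫ y, T ^ 2 * (T ^ n)⁻¹ * g (‖y - x‖ ^ 2 / T ^ 2) * eheLap v y)
        + ∫ z, P z * v (x + T • z) := by
      intro e he hee
      have := ehe_core h1 h2 hc hg (fun z => rfl) Pcont Pcs hv x he hT
      simp only [sub_mul] at this
      rw [integral_sub (ig e) (ig T)] at this
      have e2 : ∫ y, e ^ 2 * (e ^ n)⁻¹ * g (‖y - x‖ ^ 2 / e ^ 2) * eheLap v y = N x := by
        apply integral_congr_ae
        refine Eventually.of_forall fun y => ?_
        by_cases hy : eheLap v y = 0
        · simp [hy]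
        · have := hsup y hy
          simp only
          rw [ehe_profile_scale hg he (by gcongr; linarith)]
      rw [e2] at this
      linarith
    have lim := ehe_lim_zero Pcont Pcs hv.continuous hM x
    have lim2 := tendsto_nhds_unique_of_eventuallyEq lim tendsto_const_nhds
      (by
        filter_upwards [self_mem_nhdsWithin, mem_nhdsWithin_of_mem_nhds (Iio_mem_nhds he0)]
          with e he hee
        exact E e he (le_of_lt hee))
    linarith
  have const : ∀ x ∈ S, c * v x - N x = c * v x0 - N x0 := by
    intro x hx
    have l1 := ehe_lim_top Pcont Pcs P0 hv.continuous hM x x0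
    have l2 := ehe_far hn gc hg _ fi x
    have l3 := ehe_far hn gc hg _ fi x0
    have l := (l1.sub l2).add l3
    have := tendsto_nhds_unique_of_eventuallyEq l
      (tendsto_const_nhds (x := (c * v x - N x) - (c * v x0 - N x0)))
      (by
        filter_upwards [eventually_gt_atTop 0] with T hT
        rw [step x hx T hT, step x0 hx0 T hT]
        ring)
    linarith
  refine ⟨c⁻¹ * (c * v x0 - N x0), c⁻¹, fun x hx => ?_⟩
  have := const x hx
  change v x = c⁻¹ * (c * v x0 - N x0) + c⁻¹ * N x
  rw [← this]
  field_simp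
  ring

lemma ehe_lap_continuous {n : ℕ} {v : EuclideanSpace ℝ (Fin n) → ℝ}
    (hv : ContDiff ℝ 2 v) : Continuous (eheLap v) := by
  unfold eheLap
  refine continuous_finsetSum _ fun i _ => ?_
  have : ContDiff ℝ 1 (fun y => fderiv ℝ v y (EuclideanSpace.single i (1:ℝ))) :=
    (hv.fderiv_right (by norm_num)).clm_apply contDiff_const
  exact (this.continuous_fderiv (by norm_num)).clm_apply continuous_const

lemma ehe_lap_congr {n : ℕ} {v u : EuclideanSpace ℝ (Fin n) → ℝ} {x : EuclideanSpace ℝ (Fin n)}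
    (h : v =ᶠ[nhds x] u) : eheLap v x = eheLap u x := by
  unfold eheLap
  refine Finset.sum_congr rfl fun i _ => ?_
  have : (fun y => fderiv ℝ v y (EuclideanSpace.single i (1:ℝ))) =ᶠ[nhds x]
      fun y => fderiv ℝ u y (EuclideanSpace.single i (1:ℝ)) := by
    filter_upwards [h.fderiv (𝕜 := ℝ)] with y hy
    rw [hy]
  rw [this.fderiv_eq]

lemma ehe_kernel_bound {n : ℕ} (hn : 3 ≤ n) {R p q : ℝ} (hR : 0 < R) (hp : 0 < p)
    (hq : 0 < q) (hpq : q / 10 ≤ p) (hd : |p - q| ≤ 9 * R / 5) :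
    |(p ^ 2) ^ (1 - (n:ℝ) / 2) - q ^ ((2:ℝ) - n)|
      ≤ (18 * R * (n - 2 : ℕ) * 10 ^ (n - 3)) * q ^ ((1:ℝ) - n) := by
  obtain ⟨j, rfl⟩ := Nat.exists_eq_add_of_le hn
  have e1 : (p ^ 2) ^ (1 - ((3 + j : ℕ):ℝ) / 2) = (p⁻¹) ^ (j + 1) := by
    rw [← Real.rpow_natCast p 2, ← Real.rpow_mul hp.le, inv_pow, ← Real.rpow_natCast p (j + 1),
      ← Real.rpow_neg hp.le]
    congr 1
    push_cast
    ring
  have e2 : q ^ ((2:ℝ) - ((3 + j : ℕ):ℝ)) = (q⁻¹) ^ (j + 1) := by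
    rw [inv_pow, ← Real.rpow_natCast q (j + 1), ← Real.rpow_neg hq.le]
    congr 1
    push_cast
    ring
  have e3 : q ^ ((1:ℝ) - ((3 + j : ℕ):ℝ)) = (q⁻¹) ^ (j + 2) := by
    rw [inv_pow, ← Real.rpow_natCast q (j + 2), ← Real.rpow_neg hq.le]
    congr 1
    push_cast
    ring
  rw [e1, e2, e3, show 3 + j - 2 = j + 1 by omega, show 3 + j - 3 = j by omega]
  have ha : 0 < p⁻¹ := inv_pos.2 hp
  have hb : 0 < q⁻¹ := inv_pos.2 hq
  have hab : p⁻¹ ≤ 10 * q⁻¹ := by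
    rw [inv_le_comm₀ hp (by positivity), mul_inv, inv_inv]
    linarith
  have hdiff : |p⁻¹ - q⁻¹| ≤ 18 * R * q⁻¹ ^ 2 := by
    have : p⁻¹ - q⁻¹ = -(p - q) * (p⁻¹ * q⁻¹) := by
      field_simp
      ring
    rw [this, abs_mul, abs_neg, abs_of_pos (mul_pos ha hb)]
    calc |p - q| * (p⁻¹ * q⁻¹) ≤ (9 * R / 5) * ((10 * q⁻¹) * q⁻¹) := by gcongr
      _ = 18 * R * q⁻¹ ^ 2 := by ring
  calc |p⁻¹ ^ (j + 1) - q⁻¹ ^ (j + 1)|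
      ≤ |p⁻¹ - q⁻¹| * (j + 1 : ℕ) * max |p⁻¹| |q⁻¹| ^ (j + 1 - 1) := abs_pow_sub_pow_le ..
    _ ≤ (18 * R * q⁻¹ ^ 2) * (j + 1 : ℕ) * (10 * q⁻¹) ^ j := by
        rw [abs_of_pos ha, abs_of_pos hb, Nat.add_sub_cancel]
        gcongr
        exact max_le hab (by linarith)
    _ = 18 * R * (j + 1 : ℕ) * 10 ^ j * q⁻¹ ^ (j + 2) := by
        rw [mul_pow, pow_add]
        ring

/-- a bounded harmonic function on the exterior region `{‖x‖ > R}` in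
`ℝⁿ`, `n ≥ 3`, admits an expansion `U(x) = a + b‖x‖^{2-n} + O(‖x‖^{1-n})`. -/
theorem exterior_harmonic_expansion
    (n : ℕ) (hn : 3 ≤ n) (R : ℝ) (hR : 0 < R)
    (U : EuclideanSpace ℝ (Fin n) → ℝ)
    (hbdd : ∃ C : ℝ, ∀ x : EuclideanSpace ℝ (Fin n), R < ‖x‖ → |U x| ≤ C)
    (hharm : HarmonicOnSet U {x : EuclideanSpace ℝ (Fin n) | R < ‖x‖}) :
    ∃ a b C : ℝ, ∀ x : EuclideanSpace ℝ (Fin n), 2 * R ≤ ‖x‖ →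
      |U x - a - b * ‖x‖ ^ ((2 : ℝ) - n)| ≤ C * ‖x‖ ^ ((1 : ℝ) - n) := by
  obtain ⟨M, hM⟩ := hbdd
  obtain ⟨hsm, hlap⟩ := hharm
  let φ : ContDiffBump (0 : EuclideanSpace ℝ (Fin n)) :=
    ⟨6 * R / 5, 9 * R / 5, by linarith, by linarith⟩
  have φ1 : ∀ y : EuclideanSpace ℝ (Fin n), ‖y‖ ≤ 6 * R / 5 → φ y = 1 := fun y hy =>
    φ.one_of_mem_closedBall (by rw [mem_closedBall_zero_iff]; exact hy)
  have φ0 : ∀ y : EuclideanSpace ℝ (Fin n), 9 * R / 5 ≤ ‖y‖ → φ y = 0 := fun y hy =>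
    φ.zero_of_le_dist (by rw [dist_zero_right]; exact hy)
  set v : EuclideanSpace ℝ (Fin n) → ℝ := fun y => (1 - φ y) * U y with hv
  have nc : Continuous fun y : EuclideanSpace ℝ (Fin n) => ‖y‖ := continuous_norm
  have opn : IsOpen {x : EuclideanSpace ℝ (Fin n) | R < ‖x‖} := isOpen_lt continuous_const nc
  have vs : ContDiff ℝ 2 v := by
    rw [contDiff_iff_contDiffAt]
    intro y
    by_cases hy : ‖y‖ < 6 * R / 5
    · have : v =ᶠ[nhds y] fun _ => 0 := by
        filter_upwards [(isOpen_lt nc continuous_const).mem_nhds hy] with u hu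
        simp [hv, φ1 u (le_of_lt hu)]
      exact contDiffAt_const.congr_of_eventuallyEq this
    · have hy' : R < ‖y‖ := by linarith
      have h1 : ContDiffAt ℝ 2 U y :=
        (hsm.contDiffAt (opn.mem_nhds hy')).of_le (WithTop.coe_le_coe.2 (le_top : (2 : ℕ∞) ≤ ⊤))
      exact (contDiffAt_const.sub φ.contDiffAt).mul h1
  have vM : ∀ y, |v y| ≤ |M| := by
    intro y
    simp only [hv]
    by_cases hy : R < ‖y‖
    · have h1 := φ.nonneg (x := y)
      have h2 := φ.le_one (x := y)
      rw [abs_mul, abs_of_nonneg (by linarith : 0 ≤ 1 - φ y)]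
      have h3 := hM y hy
      have h4 := le_abs_self M
      have h5 := abs_nonneg (U y)
      nlinarith
    · rw [φ1 y (by linarith)]
      simp
  have f0 : ∀ y, 9 * R / 5 < ‖y‖ → eheLap v y = 0 := by
    intro y hy
    have : v =ᶠ[nhds y] U := by
      filter_upwards [(isOpen_lt continuous_const nc).mem_nhds hy] with u hu
      simp [hv, φ0 u (le_of_lt hu)]
    rw [ehe_lap_congr this]
    exact hlap y (show R < ‖y‖ by linarith)
  have fc := ehe_lap_continuous vs
  have fs : HasCompactSupport (eheLap v) := by
    apply HasCompactSupport.intro (isCompact_closedBall 0 (9 * R / 5))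
    intro y hy
    rw [mem_closedBall_zero_iff, not_le] at hy
    exact f0 y hy
  have fi : Integrable (eheLap v) := fc.integrable_of_hasCompactSupport fs
  have fn : ∀ y, eheLap v y ≠ 0 → ‖y‖ ≤ 9 * R / 5 := by
    intro y hy
    by_contra h
    exact hy (f0 y (not_le.1 h))
  obtain ⟨a, c, hac⟩ := ehe_representation hn vs vM fc fs {x | 2 * R ≤ ‖x‖} (by
    intro x hx
    refine ⟨R / 5, by linarith, fun y hy => ?_⟩
    have h1 := fn y hy
    have h2 := norm_sub_norm_le x y
    rw [norm_sub_rev] at h2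
    have h3 : 2 * R ≤ ‖x‖ := hx
    linarith)
  set C0 : ℝ := 18 * R * (n - 2 : ℕ) * 10 ^ (n - 3) with hC0
  refine ⟨a, c * ∫ y, eheLap v y, |c| * (C0 * ∫ y, |eheLap v y|), fun x hx => ?_⟩
  have vx : v x = U x := by
    simp [hv, φ0 x (by linarith)]
  rw [← vx, hac x hx]
  have pw : ∀ y, ‖((‖y - x‖ ^ 2) ^ (1 - (n:ℝ) / 2) - ‖x‖ ^ ((2 : ℝ) - n)) * eheLap v y‖
      ≤ C0 * ‖x‖ ^ ((1 : ℝ) - n) * |eheLap v y| := by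
    intro y
    by_cases hy : eheLap v y = 0
    · simp [hy]
    · rw [norm_mul, Real.norm_eq_abs, Real.norm_eq_abs]
      have h1 := fn y hy
      have h2 := norm_sub_norm_le x y
      have h3 := abs_norm_sub_norm_le (x - y) x
      rw [show x - y - x = -y by abel, norm_neg, norm_sub_rev] at h3
      rw [norm_sub_rev] at h2
      gcongr
      exact ehe_kernel_bound hn hR (by linarith) (by linarith) (by linarith) (by linarith)
  have di : Integrable fun y =>
      ((‖y - x‖ ^ 2) ^ (1 - (n:ℝ) / 2) - ‖x‖ ^ ((2 : ℝ) - n)) * eheLap v y := by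
    apply Integrable.mono' (fi.abs.const_mul (C0 * ‖x‖ ^ ((1 : ℝ) - n)))
    · apply Measurable.aestronglyMeasurable
      have := fc.measurable
      fun_prop
    · exact Eventually.of_forall pw
  have split : ∫ y, (‖y - x‖ ^ 2) ^ (1 - (n:ℝ) / 2) * eheLap v y
      = (∫ y, ((‖y - x‖ ^ 2) ^ (1 - (n:ℝ) / 2) - ‖x‖ ^ ((2 : ℝ) - n)) * eheLap v y)
        + ‖x‖ ^ ((2 : ℝ) - n) * ∫ y, eheLap v y := by
    rw [← integral_const_mul, ← integral_add di (fi.const_mul _)]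
    congr 1
    funext y
    ring
  have bd := norm_integral_le_of_norm_le (fi.abs.const_mul (C0 * ‖x‖ ^ ((1 : ℝ) - n)))
    (Eventually.of_forall pw)
  rw [integral_const_mul, Real.norm_eq_abs] at bd
  rw [split]
  set I := ∫ y, ((‖y - x‖ ^ 2) ^ (1 - (n:ℝ) / 2) - ‖x‖ ^ ((2 : ℝ) - n)) * eheLap v y
  rw [show a + c * (I + ‖x‖ ^ ((2 : ℝ) - n) * ∫ y, eheLap v y) - a
    - (c * ∫ y, eheLap v y) * ‖x‖ ^ ((2 : ℝ) - n) = c * I by ring, abs_mul]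
  calc |c| * |I| ≤ |c| * (C0 * ‖x‖ ^ ((1 : ℝ) - n) * ∫ y, |eheLap v y|) := by gcongr
    _ = _ := by ring
end

section
/- There exists a constant C, depending only on the dimension n ≥ 3, with the following property: for every R > 0 and ε > 0, if W is continuous on {x ∈ ℝⁿ : ‖x‖ ≥ R}, harmonic on {‖x‖ > R}, satisfies W(x) → 0 and ‖x‖^{n-2}·W(x) → 0 as ‖x‖ → ∞, and |W(x)| ≤ ε for every x with ‖x‖ = R, then |W(x)| ≤ C·ε·(R/‖x‖)^{n-1} for all x with ‖x‖ ≥ 2R. -/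
open Filter MeasureTheory

open InnerProductSpace Topology in
lemma line_second {n : ℕ} (f : EuclideanSpace ℝ (Fin n) → ℝ) (x v : EuclideanSpace ℝ (Fin n))
    (hf : ContDiffAt ℝ 2 f x) :
    deriv (deriv (fun t : ℝ => f (x + t • v))) 0 = iteratedFDeriv ℝ 2 f x ![v, v] := by
  have hline : ∀ t : ℝ, HasDerivAt (fun t : ℝ => x + t • v) v t := by
    intro t
    simpa using ((hasDerivAt_id t).smul_const v).const_add x
  have hcont : Tendsto (fun t : ℝ => x + t • v) (𝓝 0) (𝓝 x) := by
    have := (hline 0).continuousAt.tendsto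
    simpa using this
  have h1 : ∀ᶠ y in 𝓝 x, DifferentiableAt ℝ f y := by
    filter_upwards [hf.eventually (by simp)] with y hy
    exact hy.differentiableAt (by norm_num)
  have h2 : deriv (fun t : ℝ => f (x + t • v)) =ᶠ[𝓝 0] fun t => fderiv ℝ f (x + t • v) v := by
    filter_upwards [hcont.eventually h1] with t ht
    exact (ht.hasFDerivAt.comp_hasDerivAt t (hline t)).deriv
  rw [h2.deriv_eq, iteratedFDeriv_two_apply]
  have h3 : DifferentiableAt ℝ (fderiv ℝ f) x :=
    (hf.fderiv_right (m := 1) (by norm_num)).differentiableAt (by norm_num)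
  have h3' : HasFDerivAt (fderiv ℝ f) (fderiv ℝ (fderiv ℝ f) x) (x + (0 : ℝ) • v) := by
    simpa using h3.hasFDerivAt
  have h4 := h3'.comp_hasDerivAt (0 : ℝ) (hline 0)
  have h5 := h4.clm_apply (hasDerivAt_const (0 : ℝ) v)
  simpa using h5.deriv

open InnerProductSpace Topology in
lemma laplacian_line {n : ℕ} (f : EuclideanSpace ℝ (Fin n) → ℝ) (x : EuclideanSpace ℝ (Fin n))
    (hf : ContDiffAt ℝ 2 f x) :
    Laplacian.laplacian f x =
      ∑ i, deriv (deriv (fun t : ℝ => f (x + t • EuclideanSpace.single i (1 : ℝ)))) 0 := by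
  rw [laplacian_eq_iteratedFDeriv_orthonormalBasis f (EuclideanSpace.basisFun (Fin n) ℝ)]
  simp only [EuclideanSpace.basisFun_apply]
  exact Finset.sum_congr rfl fun i _ => (line_second f x _ hf).symm

open InnerProductSpace Topology in
lemma harmonic_bridge {n : ℕ} (f : EuclideanSpace ℝ (Fin n) → ℝ)
    (Ω : Set (EuclideanSpace ℝ (Fin n))) (hΩ : IsOpen Ω) (h : HarmonicOnSet f Ω) :
    ∀ x ∈ Ω, HarmonicAt f x := by
  have hc : ∀ x ∈ Ω, ContDiffAt ℝ 2 f x := fun x hx =>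
    (h.1.contDiffAt (hΩ.mem_nhds hx)).of_le (by
      rw [show (2 : WithTop ℕ∞) = ((2 : ℕ∞) : WithTop ℕ∞) from rfl]
      exact WithTop.coe_le_coe.2 le_top)
  intro x hx
  refine ⟨hc x hx, ?_⟩
  filter_upwards [hΩ.mem_nhds hx] with y hy
  rw [laplacian_eq_iteratedFDeriv_orthonormalBasis f (EuclideanSpace.basisFun (Fin n) ℝ)]
  simp only [EuclideanSpace.basisFun_apply, Pi.zero_apply]
  rw [← h.2 y hy]
  refine Finset.sum_congr rfl fun i _ => ?_
  rw [iteratedFDeriv_two_apply]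
  have h3 : DifferentiableAt ℝ (fderiv ℝ f) y :=
    ((hc y hy).fderiv_right (m := 1) (by norm_num)).differentiableAt (by norm_num)
  rw [fderiv_clm_apply h3 (differentiableAt_const _)]
  simp

open InnerProductSpace Topology in
lemma harmonic_comp_isometry {n : ℕ} (f : EuclideanSpace ℝ (Fin n) → ℝ)
    (σ : EuclideanSpace ℝ (Fin n) ≃ₗᵢ[ℝ] EuclideanSpace ℝ (Fin n)) (x : EuclideanSpace ℝ (Fin n))
    (h : HarmonicAt f (σ x)) : HarmonicAt (fun y => f (σ y)) x := by
  have hc : ∀ y, HarmonicAt f (σ y) → ContDiffAt ℝ 2 (fun y => f (σ y)) y := fun y hy =>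
    hy.1.comp y σ.contDiff.contDiffAt
  refine ⟨hc x h, ?_⟩
  have hev := σ.continuous.continuousAt.eventually h.eventually
  filter_upwards [hev] with y hy
  rw [laplacian_line _ _ (hc y hy), Pi.zero_apply]
  refine Eq.trans ?_ (show Laplacian.laplacian f (σ y) = (0 : ℝ) from hy.2.eq_of_nhds)
  rw [laplacian_eq_iteratedFDeriv_orthonormalBasis f ((EuclideanSpace.basisFun (Fin n) ℝ).map σ)]
  refine Finset.sum_congr rfl fun i _ => ?_
  simp only [map_add, map_smul]
  rw [line_second f (σ y) _ hy.1]
  simp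

open InnerProductSpace Topology in
lemma second_deriv_nonpos (g : ℝ → ℝ) (hg : ContinuousAt g 0) (hm : IsLocalMax g 0) :
    deriv (deriv g) 0 ≤ 0 := by
  by_contra hcon
  push Not at hcon
  have h1 := isLocalMin_of_deriv_deriv_pos hcon hm.deriv_eq_zero hg
  have h2 : g =ᶠ[𝓝 0] fun _ => g 0 := by
    filter_upwards [h1, hm] with t h1 h2
    exact le_antisymm h2 h1
  have h3 := h2.deriv.deriv_eq
  simp at h3
  linarith

lemma contDiff_inner_const {n : ℕ} (a : EuclideanSpace ℝ (Fin n)) :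
    ContDiff ℝ 2 (fun y : EuclideanSpace ℝ (Fin n) => inner ℝ a y) :=
  contDiff_const.inner ℝ contDiff_id

lemma contDiff_quad {n : ℕ} (p a : EuclideanSpace ℝ (Fin n)) (c d e : ℝ) :
    ContDiff ℝ 2 (fun y : EuclideanSpace ℝ (Fin n) =>
      c * inner ℝ a y + d * ‖y - p‖ ^ 2 + e * (inner ℝ a y) ^ 2) := by
  have h1 := contDiff_inner_const a
  have h2 : ContDiff ℝ 2 (fun y : EuclideanSpace ℝ (Fin n) => ‖y - p‖ ^ 2) :=
    (contDiff_id.sub contDiff_const).norm_sq ℝ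
  exact ((contDiff_const.mul h1).add (contDiff_const.mul h2)).add (contDiff_const.mul (h1.pow 2))

lemma norm_line {n : ℕ} (x : EuclideanSpace ℝ (Fin n)) (i : Fin n) (t : ℝ) :
    ‖x + t • EuclideanSpace.single i (1 : ℝ)‖ ^ 2 = ‖x‖ ^ 2 + 2 * t * x i + t ^ 2 := by
  rw [norm_add_sq_real, norm_smul, inner_smul_right, EuclideanSpace.inner_single_right]
  simp
  ring

lemma inner_line {n : ℕ} (a x : EuclideanSpace ℝ (Fin n)) (i : Fin n) (t : ℝ) :
    inner ℝ a (x + t • EuclideanSpace.single i (1 : ℝ)) = inner ℝ a x + t * a i := by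
  rw [inner_add_right, inner_smul_right, EuclideanSpace.inner_single_right]
  simp

lemma deriv2_quad (A B C : ℝ) (g : ℝ → ℝ) (hg : ∀ t, g t = A + B * t + C * t ^ 2) :
    deriv (deriv g) 0 = 2 * C := by
  have h0 : g = fun t => A + B * t + C * t ^ 2 := funext hg
  have h1 : deriv g = fun t => B + C * (2 * t) := by
    funext t
    rw [h0]
    have := (((hasDerivAt_id t).const_mul B).const_add A).add (((hasDerivAt_id t).pow 2).const_mul C)
    simpa using! this.deriv
  rw [h1]
  have := (((hasDerivAt_id (0:ℝ)).const_mul 2).const_mul C).const_add B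
  have h := this.deriv
  simp only [id] at h
  rw [h]; ring

lemma laplacian_quad {n : ℕ} (p a x : EuclideanSpace ℝ (Fin n)) (c d e : ℝ) :
    Laplacian.laplacian (fun y : EuclideanSpace ℝ (Fin n) =>
      c * inner ℝ a y + d * ‖y - p‖ ^ 2 + e * (inner ℝ a y) ^ 2) x
      = 2 * d * n + 2 * e * ‖a‖ ^ 2 := by
  rw [laplacian_line]
  · have : ∀ i, deriv (deriv (fun t : ℝ => c * inner ℝ a (x + t • EuclideanSpace.single i (1 : ℝ)) + 
      d * ‖(x + t • EuclideanSpace.single i (1 : ℝ)) - p‖ ^ 2 +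
      e * (inner ℝ a (x + t • EuclideanSpace.single i (1 : ℝ))) ^ 2)) 0 = 2 * (d + e * a i ^ 2) := by
      intro i
      apply deriv2_quad (c * inner ℝ a x + d * ‖x - p‖ ^ 2 + e * (inner ℝ a x) ^ 2)
        (c * a i + d * (2 * (x - p) i) + e * (2 * inner ℝ a x * a i))
      intro t
      rw [inner_line, add_sub_right_comm, norm_line]
      ring
    simp_rw [this]
    rw [EuclideanSpace.real_norm_sq_eq, ← Finset.mul_sum, Finset.sum_add_distrib, ← Finset.mul_sum]
    simp
    ring
  · exact (contDiff_quad p a c d e).contDiffAt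

open Topology in
lemma deriv2_pow (A B s b α : ℝ) (hs : 0 < s) :
    deriv (deriv fun t : ℝ => (A + t * B) * (s + 2 * t * b + t ^ 2) ^ α) 0 =
      A * (α * (α - 1) * s ^ (α - 2) * (2 * b) ^ 2 + α * s ^ (α - 1) * 2)
        + 2 * B * (α * s ^ (α - 1) * (2 * b)) := by
  have hq : ∀ t : ℝ, HasDerivAt (fun t : ℝ => s + 2 * t * b + t ^ 2) (2 * b + 2 * t) t := by
    intro t
    have := ((((hasDerivAt_id t).const_mul 2).mul_const b).const_add s).add ((hasDerivAt_id t).pow 2)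
    simpa using! this
  have hl : ∀ t : ℝ, HasDerivAt (fun t : ℝ => A + t * B) B t := by
    intro t
    simpa using ((hasDerivAt_id t).mul_const B).const_add A
  have hpos : ∀ᶠ t in 𝓝 (0:ℝ), s + 2 * t * b + t ^ 2 ≠ 0 := by
    apply (hq 0).continuousAt.eventually_ne
    simpa using hs.ne'
  have h1 : (deriv fun t : ℝ => (A + t * B) * (s + 2 * t * b + t ^ 2) ^ α) =ᶠ[𝓝 0]
      fun t => B * (s + 2 * t * b + t ^ 2) ^ α +
        (A + t * B) * ((2 * b + 2 * t) * α * (s + 2 * t * b + t ^ 2) ^ (α - 1)) := by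
    filter_upwards [hpos] with t ht
    exact ((hl t).mul ((hq t).rpow_const (Or.inl ht))).deriv
  rw [h1.deriv_eq]
  have h0 := hpos.self_of_nhds
  have hr : HasDerivAt (fun t : ℝ => 2 * b + 2 * t) 2 0 := by
    simpa using ((hasDerivAt_id (0:ℝ)).const_mul 2).const_add (2 * b)
  have h2 := (((hq 0).rpow_const (p := α) (Or.inl h0)).const_mul B).add
    ((hl 0).mul ((hr.mul_const α).mul ((hq 0).rpow_const (p := α - 1) (Or.inl h0))))
  have h3 := h2.deriv
  refine Eq.trans h3 ?_
  simp
  rw [show α - 1 - 1 = α - 2 by ring]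
  ring

open InnerProductSpace Topology in
lemma harmonic_pow {n : ℕ} (a : EuclideanSpace ℝ (Fin n)) (c α : ℝ)
    (hα : ∀ z : ℝ, (c + z) * (4 * (α - 1) + 2 * n) + 4 * z = 0 ∨ (a = 0 ∧ (4 * (α - 1) + 2 * n) = 0))
    (x : EuclideanSpace ℝ (Fin n)) (hx : x ≠ 0) :
    HarmonicAt (fun y => (c + inner ℝ a y) * (‖y‖ ^ 2) ^ α) x := by
  have hc : ∀ y : EuclideanSpace ℝ (Fin n), y ≠ 0 →
      ContDiffAt ℝ 2 (fun y => (c + inner ℝ a y) * (‖y‖ ^ 2) ^ α) y := by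
    intro y hy
    have h1 : ContDiffAt ℝ 2 (fun y : EuclideanSpace ℝ (Fin n) => ‖y‖ ^ 2) y :=
      (contDiff_id.norm_sq ℝ).contDiffAt
    have h2 := h1.rpow_const_of_ne (p := α) (by simpa using hy)
    exact (contDiffAt_const.add (contDiff_inner_const a).contDiffAt).mul h2
  refine ⟨hc x hx, ?_⟩
  filter_upwards [isOpen_ne.mem_nhds hx] with y hy
  rw [laplacian_line _ _ (hc y hy)]
  have hs : 0 < ‖y‖ ^ 2 := by positivity
  have : ∀ i, deriv (deriv fun t : ℝ => (c + inner ℝ a (y + t • EuclideanSpace.single i (1 : ℝ))) *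
      (‖y + t • EuclideanSpace.single i (1 : ℝ)‖ ^ 2) ^ α) 0 =
      (c + inner ℝ a y) * (α * (α - 1) * (‖y‖ ^ 2) ^ (α - 2) * 4) * (y i ^ 2)
      + (c + inner ℝ a y) * (α * (‖y‖ ^ 2) ^ (α - 1) * 2)
      + 4 * (α * (‖y‖ ^ 2) ^ (α - 1)) * (a i * y i) := by
    intro i
    have := deriv2_pow (c + inner ℝ a y) (a i) (‖y‖ ^ 2) (y i) α hs
    simp_rw [norm_line, inner_line, ← add_assoc]
    rw [this]
    ring
  simp_rw [this]
  rw [Finset.sum_add_distrib, Finset.sum_add_distrib, ← Finset.mul_sum,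
    ← Finset.mul_sum (f := fun i => a i * y i),
    ← EuclideanSpace.real_norm_sq_eq]
  have hin : ∑ i, a i * y i = inner ℝ a y := by
    simp [PiLp.inner_apply, mul_comm]
  rw [hin]
  have hpw : (‖y‖ ^ 2) ^ (α - 1) = (‖y‖ ^ 2) ^ (α - 2) * ‖y‖ ^ 2 := by
    rw [← Real.rpow_add_one hs.ne']; congr 1; ring
  simp only [Finset.sum_const, Finset.card_univ, Fintype.card_fin, nsmul_eq_mul, Pi.zero_apply]
  rw [hpw]
  rcases hα (inner ℝ a y) with h | ⟨h0, h⟩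
  · linear_combination α * (‖y‖ ^ 2) ^ (α - 2) * ‖y‖ ^ 2 * h
  · subst h0
    simp only [inner_zero_left]
    linear_combination c * α * (‖y‖ ^ 2) ^ (α - 2) * ‖y‖ ^ 2 * h

open InnerProductSpace Topology in
lemma max_principle {n : ℕ} (hn : 1 ≤ n) (K : Set (EuclideanSpace ℝ (Fin n))) (hK : IsCompact K)
    (f : EuclideanSpace ℝ (Fin n) → ℝ) (hf : ContinuousOn f K)
    (hh : ∀ x ∈ K, (HarmonicAt f x ∧ K ∈ 𝓝 x) ∨ f x ≤ 0) : ∀ x ∈ K, f x ≤ 0 := by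
  intro x0 hx0
  by_contra hcon
  push Not at hcon
  obtain ⟨B, hB⟩ := hK.exists_bound_of_continuousOn (f := fun y => ‖y‖ ^ 2) (by fun_prop)
  have hB0 : 0 ≤ B := le_trans (norm_nonneg _) (hB x0 hx0)
  set η := f x0 / (2 * (B + 1)) with hη
  have hηpos : 0 < η := by positivity
  have hηB : η * B < f x0 := by
    rw [hη, div_mul_eq_mul_div, div_lt_iff₀ (by positivity)]
    nlinarith
  set q : EuclideanSpace ℝ (Fin n) → ℝ := fun y => 0 * inner ℝ (0 : EuclideanSpace ℝ (Fin n)) y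
    + η * ‖y - 0‖ ^ 2 + 0 * (inner ℝ (0 : EuclideanSpace ℝ (Fin n)) y) ^ 2 with hq
  have hqv : ∀ y, q y = η * ‖y‖ ^ 2 := by intro y; simp [hq]
  have hqc : ContDiff ℝ 2 q := contDiff_quad _ _ _ _ _
  obtain ⟨z, hz, hmax⟩ := hK.exists_isMaxOn ⟨x0, hx0⟩ (hf.add hqc.continuous.continuousOn)
  have h1 : f x0 + q x0 ≤ f z + q z := hmax hx0
  have h2 : q z ≤ η * B := by
    rw [hqv]
    have := hB z hz
    rw [Real.norm_of_nonneg (by positivity)] at this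
    gcongr
  have h3 : 0 ≤ q x0 := by rw [hqv]; positivity
  rcases hh z hz with ⟨hz1, hz2⟩ | hz1
  swap
  · linarith
  have hloc : IsLocalMax (f + q) z := hmax.isLocalMax hz2
  have hfq : ContDiffAt ℝ 2 (f + q) z := hz1.1.add hqc.contDiffAt
  have hle : Laplacian.laplacian (f + q) z ≤ 0 := by
    rw [laplacian_line _ _ hfq]
    refine Finset.sum_nonpos fun i _ => ?_
    have hct : ContinuousAt (fun t : ℝ => z + t • EuclideanSpace.single i (1 : ℝ)) 0 := by fun_prop
    have e0 : z = z + (0 : ℝ) • EuclideanSpace.single i (1 : ℝ) := by simp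
    apply second_deriv_nonpos
    · apply ContinuousAt.comp (g := f + q) _ hct
      rw [← e0]; exact hfq.continuousAt
    · have ht : Tendsto (fun t : ℝ => z + t • EuclideanSpace.single i (1 : ℝ)) (𝓝 0) (𝓝 z) := by
        have := hct.tendsto
        rwa [← e0] at this
      have := ht.eventually hloc
      filter_upwards [this] with t ht
      simpa using ht
  rw [hz1.1.laplacian_add hqc.contDiffAt, hz1.2.eq_of_nhds, hq, laplacian_quad] at hle
  have : (0:ℝ) < n := by exact_mod_cast hn
  simp at hle
  nlinarith [mul_pos hηpos this]

open InnerProductSpace Topology in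
lemma max_principle_ext {n : ℕ} (hn : 1 ≤ n) (S : Set (EuclideanSpace ℝ (Fin n))) (hS : IsClosed S)
    (f : EuclideanSpace ℝ (Fin n) → ℝ) (hf : ContinuousOn f S)
    (hd : ∀ δ > 0, ∃ M : ℝ, ∀ x ∈ S, M ≤ ‖x‖ → f x ≤ δ)
    (hh : ∀ x ∈ S, (HarmonicAt f x ∧ S ∈ 𝓝 x) ∨ f x ≤ 0) : ∀ x ∈ S, f x ≤ 0 := by
  intro x hx
  refine le_of_forall_pos_le_add fun δ hδ => ?_
  obtain ⟨M, hM⟩ := hd δ hδ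
  set M' := max M ‖x‖ with hM'
  have hK : IsCompact (S ∩ Metric.closedBall 0 M') := (isCompact_closedBall 0 M').inter_left hS
  have := max_principle hn _ hK (f - fun _ => δ) ((hf.mono Set.inter_subset_left).sub continuousOn_const) ?_
    x ⟨hx, by simp [hM']⟩
  · simp only [Pi.sub_apply] at this; linarith
  · rintro y ⟨hy, hyM⟩
    simp only [mem_closedBall_zero_iff] at hyM
    rcases hyM.lt_or_eq with hlt | heq
    · rcases hh y hy with ⟨h1, h2⟩ | h1
      · left
        refine ⟨h1.sub (harmonicAt_const δ), Filter.inter_mem h2 ?_⟩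
        exact Metric.closedBall_mem_nhds_of_mem (by simpa using hlt)
      · right; simp only [Pi.sub_apply]; linarith
    · right
      have := hM y hy (by rw [heq]; exact le_max_left _ _)
      simp only [Pi.sub_apply]; linarith

lemma refl_apply {n : ℕ} (a y : EuclideanSpace ℝ (Fin n)) (ha : ‖a‖ = 1) :
    (Submodule.span ℝ {a})ᗮ.reflection y = y - (2 * inner ℝ a y) • a := by
  rw [Submodule.reflection_orthogonal_apply, Submodule.reflection_singleton_apply, ha]
  simp only [RCLike.ofReal_real_eq_id, id, one_pow, div_one]
  rw [neg_sub, two_smul, two_mul, add_smul]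

/-- The data shared by all the steps of the estimate. -/
structure ExtData {n : ℕ} (R ε : ℝ) (W : EuclideanSpace ℝ (Fin n) → ℝ) : Prop where
  hR : 0 < R
  hε : 0 < ε
  cont : ContinuousOn W {x | R ≤ ‖x‖}
  harm : ∀ x, R < ‖x‖ → InnerProductSpace.HarmonicAt W x
  decay : ∀ δ > 0, ∃ M : ℝ, ∀ x, M ≤ ‖x‖ → |W x| ≤ δ
  decay2 : ∀ δ > 0, ∃ M : ℝ, ∀ x, M ≤ ‖x‖ → |‖x‖ ^ (n - 2) * W x| ≤ δ
  bd : ∀ x, ‖x‖ = R → |W x| ≤ ε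

lemma ExtData.neg {n : ℕ} {R ε : ℝ} {W : EuclideanSpace ℝ (Fin n) → ℝ} (h : ExtData R ε W) :
    ExtData R ε (-W) where
  hR := h.hR
  hε := h.hε
  cont := h.cont.neg
  harm := fun x hx => (h.harm x hx).neg
  decay := by simpa using h.decay
  decay2 := by simpa using h.decay2
  bd := by simpa using h.bd

open InnerProductSpace Topology in
lemma ExtData.le {n : ℕ} (hn : 1 ≤ n) {R ε : ℝ} {W : EuclideanSpace ℝ (Fin n) → ℝ}
    (h : ExtData R ε W) (x : EuclideanSpace ℝ (Fin n)) (hx : R ≤ ‖x‖) : W x ≤ ε := by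
  have hcl : IsClosed {x : EuclideanSpace ℝ (Fin n) | R ≤ ‖x‖} :=
    isClosed_le continuous_const continuous_norm
  have := max_principle_ext hn {x | R ≤ ‖x‖} hcl (W - fun _ => ε)
    (h.cont.sub continuousOn_const) ?_ ?_ x hx
  · simp only [Pi.sub_apply] at this; linarith
  · intro δ hδ
    obtain ⟨M, hM⟩ := h.decay δ hδ
    refine ⟨M, fun y _ hy => ?_⟩
    have := le_of_abs_le (hM y hy)
    have := h.hε
    simp only [Pi.sub_apply]; linarith
  · intro y hy
    rcases (show R ≤ ‖y‖ from hy).lt_or_eq with h1 | h1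
    · left
      refine ⟨(h.harm y h1).sub (harmonicAt_const ε), ?_⟩
      exact Filter.mem_of_superset
        ((isOpen_lt continuous_const continuous_norm).mem_nhds h1) fun z hz => by
          rw [Set.mem_setOf_eq] at hz ⊢
          exact hz.le
    · right
      have := le_of_abs_le (h.bd y h1.symm)
      simp only [Pi.sub_apply]; linarith

lemma ExtData.abs_le {n : ℕ} (hn : 1 ≤ n) {R ε : ℝ} {W : EuclideanSpace ℝ (Fin n) → ℝ}
    (h : ExtData R ε W) (x : EuclideanSpace ℝ (Fin n)) (hx : R ≤ ‖x‖) : |W x| ≤ ε := by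
  have h1 := h.le hn x hx
  have h2 := h.neg.le hn x hx
  simp only [Pi.neg_apply] at h2
  rw [_root_.abs_le]; constructor <;> linarith

/-- odd part under the reflection orthogonal to `a` -/
noncomputable def oddPart {n : ℕ} (a : EuclideanSpace ℝ (Fin n)) (W : EuclideanSpace ℝ (Fin n) → ℝ) :
    EuclideanSpace ℝ (Fin n) → ℝ :=
  W - fun y => W ((Submodule.span ℝ {a})ᗮ.reflection y)

lemma ExtData.odd_cont {n : ℕ} {R ε : ℝ} {W : EuclideanSpace ℝ (Fin n) → ℝ}
    (h : ExtData R ε W) (a : EuclideanSpace ℝ (Fin n)) :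
    ContinuousOn (oddPart a W) {x | R ≤ ‖x‖} := by
  refine h.cont.sub (h.cont.comp (LinearIsometryEquiv.continuous _).continuousOn ?_)
  intro y hy
  simpa using hy

lemma ExtData.odd_harm {n : ℕ} {R ε : ℝ} {W : EuclideanSpace ℝ (Fin n) → ℝ}
    (h : ExtData R ε W) (a x : EuclideanSpace ℝ (Fin n)) (hx : R < ‖x‖) :
    InnerProductSpace.HarmonicAt (oddPart a W) x := by
  refine (h.harm x hx).sub (harmonic_comp_isometry W _ x (h.harm _ ?_))
  simpa using hx

lemma ExtData.odd_le {n : ℕ} (hn : 1 ≤ n) {R ε : ℝ} {W : EuclideanSpace ℝ (Fin n) → ℝ}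
    (h : ExtData R ε W) (a x : EuclideanSpace ℝ (Fin n)) (hx : R ≤ ‖x‖) :
    oddPart a W x ≤ 2 * ε := by
  have h1 := le_of_abs_le (h.abs_le hn x hx)
  have h2 := neg_le_of_abs_le (h.abs_le hn ((Submodule.span ℝ {a})ᗮ.reflection x) (by simpa using hx))
  simp only [oddPart, Pi.sub_apply]; linarith

lemma odd_zero {n : ℕ} (W : EuclideanSpace ℝ (Fin n) → ℝ)
    (a x : EuclideanSpace ℝ (Fin n)) (ha : ‖a‖ = 1) (hx : inner ℝ a x = 0) :
    oddPart a W x = 0 := by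
  simp [oddPart, refl_apply a x ha, hx]

lemma half_mem {n : ℕ} (a x : EuclideanSpace ℝ (Fin n)) (hx : 0 < inner ℝ a x) :
    {y : EuclideanSpace ℝ (Fin n) | 0 ≤ inner ℝ a y} ∈ nhds x :=
  Filter.mem_of_superset
    ((isOpen_lt continuous_const (contDiff_inner_const a).continuous).mem_nhds hx)
    fun z hz => by
          rw [Set.mem_setOf_eq] at hz ⊢
          exact hz.le

lemma half_closed {n : ℕ} (a : EuclideanSpace ℝ (Fin n)) :
    IsClosed {y : EuclideanSpace ℝ (Fin n) | 0 ≤ inner ℝ a y} :=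
  isClosed_le continuous_const (contDiff_inner_const a).continuous

lemma half_cases {n : ℕ} (a p y : EuclideanSpace ℝ (Fin n)) (ρ : ℝ)
    (hy1 : ‖y - p‖ ≤ ρ) (hy2 : 0 ≤ inner ℝ a y) :
    (‖y - p‖ < ρ ∧ 0 < inner ℝ a y) ∨ inner ℝ a y = 0 ∨ ‖y - p‖ = ρ := by
  rcases hy1.lt_or_eq with h | h
  · rcases hy2.lt_or_eq with h' | h'
    · exact Or.inl ⟨h, h'⟩
    · exact Or.inr (Or.inl h'.symm)
  · exact Or.inr (Or.inr h)

open InnerProductSpace Topology in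
lemma ExtData.odd_local {n : ℕ} (hn : 1 ≤ n) {R ε : ℝ} {W : EuclideanSpace ℝ (Fin n) → ℝ}
    (h : ExtData R ε W) (a x : EuclideanSpace ℝ (Fin n)) (ha : ‖a‖ = 1) (hx : ‖x‖ = 2 * R)
    (hax : 0 ≤ inner ℝ a x) : oddPart a W x ≤ 4 * n * ε / R * inner ℝ a x := by
  have hR := h.hR
  have hε := h.hε
  have hn1 : (1 : ℝ) ≤ n := by exact_mod_cast hn
  set t : ℝ := inner ℝ a x with ht
  rcases le_or_gt (R / 2) t with hbig | hsmall
  · have h1 := h.odd_le hn a x (by rw [hx]; linarith)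
    have : 2 * ε ≤ 4 * n * ε / R * t := by
      rw [div_mul_eq_mul_div, le_div_iff₀ hR]
      nlinarith [mul_le_mul_of_nonneg_left hbig (by positivity : 0 ≤ 4 * n * ε),
        mul_le_mul_of_nonneg_right hn1 (by positivity : 0 ≤ 2 * ε * R)]
    linarith
  set ρ := R / 2 with hρ
  have hρ0 : 0 < ρ := by positivity
  set p := x - t • a with hp
  have haa : inner ℝ a a = (1 : ℝ) := by rw [real_inner_self_eq_norm_sq, ha]; norm_num
  have hap : inner ℝ a p = (0 : ℝ) := by
    rw [hp, inner_sub_right, inner_smul_right, haa, ← ht]; ring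
  have hxp : x - p = t • a := by rw [hp]; abel
  have hxpn : ‖x - p‖ = t := by rw [hxp, norm_smul, ha, Real.norm_of_nonneg hax]; ring
  have hpn : ‖p‖ ^ 2 = 4 * R ^ 2 - t ^ 2 := by
    rw [hp, norm_sub_sq_real, inner_smul_right, norm_smul, ha, real_inner_comm, ← ht, hx]
    rw [Real.norm_of_nonneg hax]; ring
  have hpn' : 3 / 2 * R < ‖p‖ := by
    apply lt_of_pow_lt_pow_left₀ 2 (norm_nonneg _)
    rw [hpn]; nlinarith
  set S := Metric.closedBall p ρ ∩ {y | 0 ≤ inner ℝ a y} with hS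
  have hSc : IsCompact S := (isCompact_closedBall p ρ).inter_right (half_closed a)
  have hSR : ∀ y ∈ Metric.closedBall p ρ, R < ‖y‖ := by
    intro y hy
    rw [mem_closedBall_iff_norm] at hy
    have : ‖p‖ ≤ ‖y‖ + ‖y - p‖ := by
      have := norm_sub_le y (y - p)
      simpa using this
    rw [hρ] at hy
    linarith
  set q : EuclideanSpace ℝ (Fin n) → ℝ := fun y => (2 * ε * n / ρ) * inner ℝ a y +
    (2 * ε / ρ ^ 2) * ‖y - p‖ ^ 2 + (-(2 * ε / ρ ^ 2) * n) * (inner ℝ a y) ^ 2 with hq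
  have hqc : ContDiff ℝ 2 q := contDiff_quad _ _ _ _ _
  have hqh : ∀ y, HarmonicAt q y := by
    intro y
    refine ⟨hqc.contDiffAt, Filter.Eventually.of_forall fun z => ?_⟩
    rw [hq, laplacian_quad, ha]
    simp only [Pi.zero_apply]; ring
  have hqlow : ∀ y ∈ S, 2 * ε / ρ ^ 2 * ‖y - p‖ ^ 2 ≤ q y := by
    rintro y ⟨hy1, hy2⟩
    rw [mem_closedBall_iff_norm] at hy1
    have hy2' : (0 : ℝ) ≤ inner ℝ a y := hy2
    have h3 : inner ℝ a y ≤ ρ := by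
      have : inner ℝ a y = inner ℝ a (y - p) := by rw [inner_sub_right, hap]; ring
      rw [this]
      refine (real_inner_le_norm _ _).trans ?_
      rw [ha]; linarith
    have h4 : q y - 2 * ε / ρ ^ 2 * ‖y - p‖ ^ 2 = 2 * ε * n / ρ ^ 2 * (inner ℝ a y * (ρ - inner ℝ a y)) := by
      rw [hq]; field_simp; ring
    have h5 : 0 ≤ 2 * ε * n / ρ ^ 2 * (inner ℝ a y * (ρ - inner ℝ a y)) :=
      mul_nonneg (by positivity) (mul_nonneg hy2' (by linarith))
    linarith
  have hmain := max_principle hn S hSc (oddPart a W - q)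
    (((h.odd_cont a).mono fun y hy => (hSR y hy.1).le).sub hqc.continuous.continuousOn) ?_ x
    ⟨by rw [mem_closedBall_iff_norm, hxpn]; exact hsmall.le, hax⟩
  · have hqx : q x ≤ 4 * n * ε / R * t := by
      have : q x = 4 * n * ε / R * t - 2 * ε / ρ ^ 2 * (n - 1) * t ^ 2 := by
        simp only [hq, hxpn, ← ht, hρ]
        field_simp; ring
      rw [this]
      have : 0 ≤ 2 * ε / ρ ^ 2 * (n - 1) * t ^ 2 :=
        mul_nonneg (mul_nonneg (by positivity) (by linarith)) (by positivity)
      linarith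
    simp only [Pi.sub_apply] at hmain
    linarith
  · intro y hy
    have hlow := hqlow y hy
    have hy1 : ‖y - p‖ ≤ ρ := by have := hy.1; rwa [mem_closedBall_iff_norm] at this
    rcases half_cases a p y ρ hy1 hy.2 with ⟨h1, h2⟩ | h1 | h1
    · left
      refine ⟨(h.odd_harm a y (hSR y hy.1)).sub (hqh y), Filter.inter_mem ?_ (half_mem a y h2)⟩
      exact Metric.closedBall_mem_nhds_of_mem (by rwa [mem_ball_iff_norm])
    · right
      have : 0 ≤ 2 * ε / ρ ^ 2 * ‖y - p‖ ^ 2 := by positivity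
      simp only [Pi.sub_apply, odd_zero W a y ha h1]
      linarith
    · right
      rw [h1] at hlow
      have e : 2 * ε / ρ ^ 2 * ρ ^ 2 = 2 * ε := by field_simp
      have := h.odd_le hn a y (hSR y hy.1).le
      simp only [Pi.sub_apply]
      linarith

lemma pow_half (n : ℕ) (s : ℝ) (hs : 0 < s) : (s ^ 2) ^ (-(n : ℝ) / 2) = (s ^ n)⁻¹ := by
  rw [← Real.rpow_natCast s 2, ← Real.rpow_mul hs.le, ← Real.rpow_natCast, ← Real.rpow_neg hs.le]
  congr 1; push_cast; ring

open InnerProductSpace Topology in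
lemma ExtData.odd_far {n : ℕ} (hn : 1 ≤ n) {R ε : ℝ} {W : EuclideanSpace ℝ (Fin n) → ℝ}
    (h : ExtData R ε W) (a x : EuclideanSpace ℝ (Fin n)) (ha : ‖a‖ = 1) (hx : 2 * R ≤ ‖x‖)
    (hax : 0 ≤ inner ℝ a x) :
    oddPart a W x ≤ 4 * n * ε / R * (2 * R) ^ n * (inner ℝ a x * (‖x‖ ^ n)⁻¹) := by
  have hR := h.hR
  have hε := h.hε
  have hpos : ∀ y : EuclideanSpace ℝ (Fin n), 2 * R ≤ ‖y‖ → 0 < ‖y‖ := fun y hy => by linarith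
  set c := 4 * n * ε / R * (2 * R) ^ n with hc
  have hc0 : 0 ≤ c := by positivity
  set q : EuclideanSpace ℝ (Fin n) → ℝ := c • fun y => (0 + inner ℝ a y) * (‖y‖ ^ 2) ^ (-(n : ℝ) / 2) with hq
  have hqh : ∀ y : EuclideanSpace ℝ (Fin n), 2 * R ≤ ‖y‖ → HarmonicAt q y := by
    intro y hy
    refine (harmonic_pow a 0 _ (fun z => Or.inl ?_) y (norm_pos_iff.1 (hpos y hy))).const_smul
    ring
  have hqv : ∀ y : EuclideanSpace ℝ (Fin n), 2 * R ≤ ‖y‖ → q y = c * (inner ℝ a y * (‖y‖ ^ n)⁻¹) := by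
    intro y hy
    simp only [hq, Pi.smul_apply, smul_eq_mul, zero_add, pow_half n _ (hpos y hy)]
  have hq0 : ∀ y : EuclideanSpace ℝ (Fin n), 2 * R ≤ ‖y‖ → (0:ℝ) ≤ inner ℝ a y → 0 ≤ q y := by
    intro y hy hy2
    rw [hqv y hy]
    positivity
  set S : Set (EuclideanSpace ℝ (Fin n)) := {y | 2 * R ≤ ‖y‖} ∩ {y | 0 ≤ inner ℝ a y} with hS
  have hScl : IsClosed S := (isClosed_le continuous_const continuous_norm).inter (half_closed a)
  have := max_principle_ext hn S hScl (oddPart a W - q) ?_ ?_ ?_ x ⟨hx, hax⟩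
  · simp only [Pi.sub_apply] at this
    rw [hqv x hx] at this
    linarith
  · refine ((h.odd_cont a).mono fun y hy => ?_).sub fun y hy =>
      (hqh y hy.1).1.continuousAt.continuousWithinAt
    have : 2 * R ≤ ‖y‖ := hy.1
    show R ≤ ‖y‖
    linarith
  · intro δ hδ
    obtain ⟨M, hM⟩ := h.decay (δ / 2) (by positivity)
    refine ⟨M, fun y hy hyM => ?_⟩
    have h1 := le_of_abs_le (hM y hyM)
    have h2 := neg_le_of_abs_le (hM ((Submodule.span ℝ {a})ᗮ.reflection y) (by simpa using hyM))
    have h3 := hq0 y hy.1 hy.2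
    simp only [Pi.sub_apply, oddPart]
    linarith
  · intro y hy
    have hy1 : 2 * R ≤ ‖y‖ := hy.1
    have hy2 : (0:ℝ) ≤ inner ℝ a y := hy.2
    rcases hy1.lt_or_eq with h1 | h1
    · rcases hy2.lt_or_eq with h2 | h2
      · left
        refine ⟨(h.odd_harm a y (by linarith)).sub (hqh y hy1), Filter.inter_mem ?_ (half_mem a y h2)⟩
        exact Filter.mem_of_superset
          ((isOpen_lt continuous_const continuous_norm).mem_nhds h1) fun z hz => by
          rw [Set.mem_setOf_eq] at hz ⊢
          exact hz.le
      · right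
        have := hq0 y hy1 hy2
        simp only [Pi.sub_apply, odd_zero W a y ha h2.symm]
        linarith
    · right
      have h2 := h.odd_local hn a y ha h1.symm hy2
      simp only [Pi.sub_apply]
      rw [hqv y hy1, hc, ← h1]
      have : (4 * n * ε / R * (2 * R) ^ n) * (inner ℝ a y * ((2 * R) ^ n)⁻¹) =
        4 * n * ε / R * inner ℝ a y := by field_simp
      linarith

lemma ExtData.osc {n : ℕ} (hn : 1 ≤ n) {R ε : ℝ} {W : EuclideanSpace ℝ (Fin n) → ℝ}
    (h : ExtData R ε W) (x y : EuclideanSpace ℝ (Fin n)) (hx : 2 * R ≤ ‖x‖) (hxy : ‖x‖ = ‖y‖) :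
    W x - W y ≤ 4 * n * 2 ^ n * ε * (R / ‖x‖) ^ (n - 1) := by
  have hR := h.hR
  have hε := h.hε
  have hx0 : 0 < ‖x‖ := by linarith
  rcases eq_or_ne x y with rfl | hne
  · rw [sub_self]; positivity
  have hd : 0 < ‖x - y‖ := norm_pos_iff.2 (sub_ne_zero.2 hne)
  set a := (‖x - y‖⁻¹) • (x - y) with ha
  have ha1 : ‖a‖ = 1 := by
    rw [ha, norm_smul, norm_inv, norm_norm, inv_mul_cancel₀ hd.ne']
  have hin : inner ℝ (x - y) x = ‖x - y‖ ^ 2 / 2 := by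
    rw [norm_sub_sq_real, inner_sub_left, real_inner_self_eq_norm_sq, ← hxy, real_inner_comm]; ring
  have hax : inner ℝ a x = ‖x - y‖ / 2 := by
    rw [ha, real_inner_smul_left, hin]; field_simp
  have hrefl : (Submodule.span ℝ {a})ᗮ.reflection x = y := by
    rw [refl_apply a x ha1, hax, ha, smul_smul]
    rw [show 2 * (‖x - y‖ / 2) * ‖x - y‖⁻¹ = 1 by field_simp]
    simp
  have hax0 : 0 ≤ inner ℝ a x := by rw [hax]; positivity
  have hle : inner ℝ a x ≤ ‖x‖ := by
    have := real_inner_le_norm a x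
    rwa [ha1, one_mul] at this
  have h1 := h.odd_far hn a x ha1 hx hax0
  simp only [oddPart, Pi.sub_apply, hrefl] at h1
  refine h1.trans ?_
  obtain ⟨m, rfl⟩ : ∃ m, n = m + 1 := ⟨n - 1, by omega⟩
  have h2 : inner ℝ a x * (‖x‖ ^ (m + 1))⁻¹ ≤ ‖x‖ * (‖x‖ ^ (m + 1))⁻¹ := by gcongr
  refine (mul_le_mul_of_nonneg_left h2 (by positivity)).trans (le_of_eq ?_)
  simp only [Nat.add_sub_cancel]
  rw [div_pow, mul_pow, pow_succ R, pow_succ ‖x‖]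
  field_simp

open InnerProductSpace Topology in
lemma ExtData.exists_nonpos {n : ℕ} (hn : 3 ≤ n) {R ε : ℝ} {W : EuclideanSpace ℝ (Fin n) → ℝ}
    (h : ExtData R ε W) (r : ℝ) (hr : R < r) : ∃ y, ‖y‖ = r ∧ W y ≤ 0 := by
  by_contra hcon
  push Not at hcon
  have hR := h.hR
  have hr0 : 0 < r := by linarith
  have hpos : ∀ y : EuclideanSpace ℝ (Fin n), r ≤ ‖y‖ → 0 < ‖y‖ := fun y hy => by linarith
  have hx0 : ∀ s : ℝ, 0 ≤ s → ∃ x : EuclideanSpace ℝ (Fin n), ‖x‖ = s := fun s hs =>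
    ⟨EuclideanSpace.single (⟨0, by omega⟩ : Fin n) s, by simp [abs_of_nonneg hs]⟩
  have hsph : (Metric.sphere (0 : EuclideanSpace ℝ (Fin n)) r).Nonempty := by
    obtain ⟨x, hx⟩ := hx0 r hr0.le
    exact ⟨x, by simpa using hx⟩
  obtain ⟨z, hz, hmin⟩ := (isCompact_sphere (0 : EuclideanSpace ℝ (Fin n)) r).exists_isMinOn hsph
    (h.cont.mono fun y hy => by
      have : ‖y‖ = r := by simpa using hy
      show R ≤ ‖y‖
      linarith)
  have hm : 0 < W z := hcon z (by simpa using hz)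
  set m := W z with hmdef
  have hm' : ∀ y, ‖y‖ = r → m ≤ W y := fun y hy => hmin (by simpa using hy)
  set c := m * r ^ (n - 2) with hc
  have hc0 : 0 < c := by positivity
  set q : EuclideanSpace ℝ (Fin n) → ℝ := c • fun y =>
    (1 + inner ℝ (0 : EuclideanSpace ℝ (Fin n)) y) * (‖y‖ ^ 2) ^ (-((n - 2 : ℕ) : ℝ) / 2) with hq
  have hqh : ∀ y : EuclideanSpace ℝ (Fin n), r ≤ ‖y‖ → HarmonicAt q y := by
    intro y hy
    refine (harmonic_pow 0 1 _ (fun z => Or.inr ⟨rfl, ?_⟩) y (norm_pos_iff.1 (hpos y hy))).const_smul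
    rw [Nat.cast_sub (by omega)]
    push_cast; ring
  have hqv : ∀ y : EuclideanSpace ℝ (Fin n), r ≤ ‖y‖ → q y = c * (‖y‖ ^ (n - 2))⁻¹ := by
    intro y hy
    simp only [hq, Pi.smul_apply, smul_eq_mul, inner_zero_left, add_zero, one_mul,
      pow_half _ _ (hpos y hy)]
  have hcl : IsClosed {x : EuclideanSpace ℝ (Fin n) | r ≤ ‖x‖} :=
    isClosed_le continuous_const continuous_norm
  have key := max_principle_ext (by omega) {x : EuclideanSpace ℝ (Fin n) | r ≤ ‖x‖} hcl (q - W) ?_ ?_ ?_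
  · obtain ⟨M, hM⟩ := h.decay2 (c / 2) (by positivity)
    obtain ⟨x, hx⟩ := hx0 (max M r) (le_max_of_le_right hr0.le)
    have hxr : r ≤ ‖x‖ := by rw [hx]; exact le_max_right _ _
    have h1 := le_of_abs_le (hM x (by rw [hx]; exact le_max_left _ _))
    have h2 := key x hxr
    have hp := hpos x hxr
    simp only [Pi.sub_apply, hqv x hxr] at h2
    have h3 : c * (‖x‖ ^ (n - 2))⁻¹ ≤ W x := by linarith
    have h4 := mul_le_mul_of_nonneg_left h3 (by positivity : 0 ≤ ‖x‖ ^ (n - 2))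
    have h5 : ‖x‖ ^ (n - 2) * (c * (‖x‖ ^ (n - 2))⁻¹) = c := by field_simp
    linarith
  · exact ContinuousOn.sub (fun y hy => (hqh y hy).1.continuousAt.continuousWithinAt)
      (h.cont.mono fun y hy => hr.le.trans hy)
  · intro δ hδ
    obtain ⟨M, hM⟩ := h.decay (δ / 2) (by positivity)
    refine ⟨max M (max 1 (2 * c / δ)), fun y hy hyM => ?_⟩
    have h1 := neg_le_of_abs_le (hM y ((le_max_left _ _).trans hyM))
    have h2 : 1 ≤ ‖y‖ := ((le_max_left _ _).trans (le_max_right _ _)).trans hyM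
    have h3 : 2 * c / δ ≤ ‖y‖ := ((le_max_right _ _).trans (le_max_right _ _)).trans hyM
    have h4 : ‖y‖ ≤ ‖y‖ ^ (n - 2) := le_self_pow₀ h2 (by omega)
    have h5 : q y ≤ δ / 2 := by
      rw [hqv y hy, ← div_eq_mul_inv, div_le_iff₀ (by positivity)]
      rw [div_le_iff₀ hδ] at h3
      nlinarith
    simp only [Pi.sub_apply]; linarith
  · intro y hy
    have hy1 : r ≤ ‖y‖ := hy
    rcases hy1.lt_or_eq with h1 | h1
    · left
      refine ⟨(hqh y hy1).sub (h.harm y (by linarith)), ?_⟩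
      exact Filter.mem_of_superset
        ((isOpen_lt continuous_const continuous_norm).mem_nhds h1) fun z hz => by
          rw [Set.mem_setOf_eq] at hz ⊢
          exact hz.le
    · right
      have h2 := hm' y h1.symm
      have h3 : c * (r ^ (n - 2))⁻¹ = m := by rw [hc]; field_simp
      simp only [Pi.sub_apply, hqv y hy1]
      rw [← h1]
      linarith

lemma ExtData.final {n : ℕ} (hn : 3 ≤ n) {R ε : ℝ} {W : EuclideanSpace ℝ (Fin n) → ℝ}
    (h : ExtData R ε W) (x : EuclideanSpace ℝ (Fin n)) (hx : 2 * R ≤ ‖x‖) :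
    W x ≤ 4 * n * 2 ^ n * ε * (R / ‖x‖) ^ (n - 1) := by
  obtain ⟨y, hy, hy0⟩ := h.exists_nonpos hn ‖x‖ (by have := h.hR; linarith)
  have := h.osc (by omega) x y hx hy.symm
  linarith

lemma decay_of_tendsto {n : ℕ} (f : EuclideanSpace ℝ (Fin n) → ℝ)
    (h : Tendsto f (comap (fun x : EuclideanSpace ℝ (Fin n) => ‖x‖) atTop) (nhds 0)) :
    ∀ δ > 0, ∃ M : ℝ, ∀ x, M ≤ ‖x‖ → |f x| ≤ δ := by
  intro δ hδ
  have := h.eventually (Metric.closedBall_mem_nhds 0 hδ)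
  rw [Filter.eventually_comap] at this
  obtain ⟨M, hM⟩ := Filter.eventually_atTop.1 this
  refine ⟨M, fun x hx => ?_⟩
  simpa using hM _ hx x rfl

/-- decay estimate for an exterior harmonic function whose expansion at
infinity has no constant and no `‖x‖^{2-n}` term: if `|W| ≤ ε` on the sphere of radius
`R`, then `|W(x)| ≤ C·ε·(R/‖x‖)^{n-1}` for `‖x‖ ≥ 2R`, with `C` depending only on `n`. -/
theorem exterior_harmonic_decay (n : ℕ) (hn : 3 ≤ n) :
    ∃ C : ℝ, ∀ R ε : ℝ, 0 < R → 0 < ε →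
      ∀ W : EuclideanSpace ℝ (Fin n) → ℝ,
        ContinuousOn W {x : EuclideanSpace ℝ (Fin n) | R ≤ ‖x‖} →
        HarmonicOnSet W {x : EuclideanSpace ℝ (Fin n) | R < ‖x‖} →
        Tendsto W (comap (fun x : EuclideanSpace ℝ (Fin n) => ‖x‖) atTop) (nhds 0) →
        Tendsto (fun x : EuclideanSpace ℝ (Fin n) => ‖x‖ ^ (n - 2) * W x)
          (comap (fun x : EuclideanSpace ℝ (Fin n) => ‖x‖) atTop) (nhds 0) →
        (∀ x : EuclideanSpace ℝ (Fin n), ‖x‖ = R → |W x| ≤ ε) →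
        ∀ x : EuclideanSpace ℝ (Fin n), 2 * R ≤ ‖x‖ →
          |W x| ≤ C * ε * (R / ‖x‖) ^ (n - 1) := by
  refine ⟨4 * n * 2 ^ n, ?_⟩
  intro R ε hR hε W hc hh h1 h2 hb x hx
  have h : ExtData R ε W :=
    { hR := hR
      hε := hε
      cont := hc
      harm := harmonic_bridge W _ (isOpen_lt continuous_const continuous_norm) hh
      decay := decay_of_tendsto _ h1
      decay2 := decay_of_tendsto _ h2
      bd := hb }
  have e1 := h.final hn x hx
  have e2 := h.neg.final hn x hx
  simp only [Pi.neg_apply] at e2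
  exact abs_le.2 ⟨by linarith, e1⟩
end

section
/- Let n ≥ 3 and let U be a positive harmonic function on ℝⁿ ∖ {0} with U(x) → 1 as ‖x‖ → ∞. Then there exists b ≥ 0 such that U(x) = 1 + b·‖x‖^{2-n} for all x ≠ 0. -/
open Filter MeasureTheory

lemma hasDerivAt_max_sq (s : ℝ) : HasDerivAt (fun s : ℝ => (max s 0)^2) (2 * max s 0) s := by
  rcases lt_trichotomy s 0 with h | h | h
  · have : HasDerivAt (fun _ : ℝ => (0:ℝ)) 0 s := hasDerivAt_const _ _
    rw [max_eq_right h.le, mul_zero]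
    refine this.congr_of_eventuallyEq ?_
    filter_upwards [eventually_lt_nhds h] with t ht
    simp [max_eq_right ht.le]
  · subst h
    rw [hasDerivAt_iff_isLittleO]
    simp only [sub_zero, max_self, mul_zero, smul_zero, ne_eq, OfNat.ofNat_ne_zero, not_false_eq_true, zero_pow]
    refine Asymptotics.IsBigO.trans_isLittleO (g := fun t : ℝ => t^2) ?_ ?_
    · refine Asymptotics.IsBigO.of_bound 1 (Eventually.of_forall fun t => ?_)
      rw [Real.norm_eq_abs, Real.norm_eq_abs, one_mul, abs_of_nonneg (sq_nonneg (max t 0)), abs_of_nonneg (sq_nonneg t)]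
      rcases le_total t 0 with h | h
      · rw [max_eq_right h]; simpa using sq_nonneg t
      · rw [max_eq_left h]
    · exact Asymptotics.isLittleO_pow_id (by norm_num)
  · rw [max_eq_left h.le]
    have : HasDerivAt (fun s : ℝ => s^2) (2 * s) s := by simpa using hasDerivAt_pow 2 s
    refine this.congr_of_eventuallyEq ?_
    filter_upwards [eventually_gt_nhds h] with t ht
    simp [max_eq_left ht.le]

noncomputable def phi {n : ℕ} (y : EuclideanSpace ℝ (Fin n)) : ℝ := max (1 - ‖y‖^2) 0
noncomputable def psi {n : ℕ} (y : EuclideanSpace ℝ (Fin n)) : ℝ := -(1/4) * (max (1 - ‖y‖^2) 0)^2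

section
variable {n : ℕ}
local notation "E" => EuclideanSpace ℝ (Fin n)

lemma phi_cont : Continuous (phi : E → ℝ) := by unfold phi; fun_prop
lemma psi_cont : Continuous (psi : E → ℝ) := by unfold psi; fun_prop
lemma phi_nonneg (y : E) : 0 ≤ phi y := le_max_right _ _
lemma phi_le_one (y : E) : phi y ≤ 1 := max_le (by nlinarith [sq_nonneg ‖y‖]) zero_le_one
lemma phi_zero {y : E} (h : 1 ≤ ‖y‖) : phi y = 0 := max_eq_right (by nlinarith)
lemma psi_zero {y : E} (h : 1 ≤ ‖y‖) : psi y = 0 := by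
  unfold psi; rw [max_eq_right (by nlinarith)]; simp
lemma phi_supp : HasCompactSupport (phi : E → ℝ) :=
  HasCompactSupport.intro (isCompact_closedBall 0 1) fun y hy => phi_zero (by simp at hy; exact hy.le)
lemma psi_supp : HasCompactSupport (psi : E → ℝ) :=
  HasCompactSupport.intro (isCompact_closedBall 0 1) fun y hy => psi_zero (by simp at hy; exact hy.le)
lemma psi_deriv (y : E) : HasFDerivAt (psi : E → ℝ) (phi y • innerSL ℝ y) y := by
  have h1 : HasFDerivAt (fun y : E => 1 - ‖y‖^2) (-(2 • innerSL ℝ y)) y :=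
    ((hasStrictFDerivAt_norm_sq y).hasFDerivAt).const_sub 1
  have h2 := ((hasDerivAt_max_sq (1 - ‖y‖^2)).comp_hasFDerivAt y h1).const_mul (-(1/4))
  refine h2.congr_fderiv ?_
  ext v
  simp [phi]
  ring
lemma phi_int_pos : 0 < ∫ y : E, phi y := by
  refine Continuous.integral_pos_of_hasCompactSupport_nonneg_nonzero phi_cont phi_supp phi_nonneg (x := 0) ?_
  simp [phi]

noncomputable def lap (f : E → ℝ) (x : E) : ℝ := ∑ i : Fin n,
      fderiv ℝ (fun y => fderiv ℝ f y (EuclideanSpace.single i (1:ℝ))) x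
        (EuclideanSpace.single i (1:ℝ))

lemma mv_deriv (g : E → ℝ) (hg : ContDiff ℝ 2 g) (t : ℝ) :
    ∫ y : E, fderiv ℝ g (t • y) y * phi y = - t * ∫ y : E, lap g (t • y) * psi y := by
  have hd : ContDiff ℝ 1 (fderiv ℝ g) := hg.fderiv_right (by norm_num)
  have hdi (i : Fin n) : ContDiff ℝ 1 (fun y => fderiv ℝ g y (EuclideanSpace.single i (1:ℝ))) :=
    hd.clm_apply contDiff_const
  have hc (i : Fin n) : Continuous (fun y => fderiv ℝ (fun y => fderiv ℝ g y (EuclideanSpace.single i (1:ℝ))) y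
     (EuclideanSpace.single i (1:ℝ))) :=
    ((hdi i).continuous_fderiv (by norm_num)).clm_apply continuous_const
  have key (i : Fin n) : ∫ y : E, fderiv ℝ g (t • y) (EuclideanSpace.single i (1:ℝ)) * (phi y * y i) =
      - ∫ y : E, (t * fderiv ℝ (fun y => fderiv ℝ g y (EuclideanSpace.single i (1:ℝ))) (t • y)
        (EuclideanSpace.single i (1:ℝ))) * psi y := by
    have hf1 (y : E) : HasFDerivAt (fun y : E => fderiv ℝ g (t • y) (EuclideanSpace.single i (1:ℝ)))
       (t • fderiv ℝ (fun y => fderiv ℝ g y (EuclideanSpace.single i (1:ℝ))) (t • y)) y := by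
      have h1 := ((hdi i).differentiable (by norm_num) (t • y)).hasFDerivAt
      have h2 : HasFDerivAt (fun y : E => t • y) (t • ContinuousLinearMap.id ℝ E) y :=
        (hasFDerivAt_id y).const_smul t
      refine (h1.comp y h2).congr_fderiv ?_
      ext v; simp
    have e1 (y : E) : fderiv ℝ psi y (EuclideanSpace.single i (1:ℝ)) = phi y * y i := by
      rw [(psi_deriv y).fderiv]; simp [EuclideanSpace.inner_single_right]
    have e2 (y : E) : fderiv ℝ (fun y : E => fderiv ℝ g (t • y) (EuclideanSpace.single i (1:ℝ))) y (EuclideanSpace.single i (1:ℝ))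
       = t * fderiv ℝ (fun y => fderiv ℝ g y (EuclideanSpace.single i (1:ℝ))) (t • y)
        (EuclideanSpace.single i (1:ℝ)) := by
      rw [(hf1 y).fderiv]; simp
    have hcs : Continuous (fun y : E => t • y) := by fun_prop
    have hci : Continuous (fun y : E => y i) := by fun_prop
    have := integral_mul_fderiv_eq_neg_fderiv_mul_of_integrable (𝕜 := ℝ) (μ := (volume : Measure E))
      (f := fun y : E => fderiv ℝ g (t • y) (EuclideanSpace.single i (1:ℝ)))
      (g := psi) (v := EuclideanSpace.single i (1:ℝ)) ?_ ?_ ?_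
      (fun y _ => (hf1 y).differentiableAt) (fun y _ => (psi_deriv y).differentiableAt)
    · simpa only [e1, e2] using this
    · simp only [e2]
      exact Continuous.integrable_of_hasCompactSupport ((continuous_const.mul ((hc i).comp hcs)).mul psi_cont) psi_supp.mul_left
    · simp only [e1]
      exact Continuous.integrable_of_hasCompactSupport (((hdi i).continuous.comp hcs).mul (phi_cont.mul hci)) (phi_supp.mul_right.mul_left)
    · exact Continuous.integrable_of_hasCompactSupport (((hdi i).continuous.comp hcs).mul psi_cont) psi_supp.mul_left
  have hcs : Continuous (fun y : E => t • y) := by fun_prop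
  have l1 (y : E) : fderiv ℝ g (t • y) y * phi y =
     ∑ i, fderiv ℝ g (t • y) (EuclideanSpace.single i (1:ℝ)) * (phi y * y i) := by
    have : fderiv ℝ g (t • y) y = ∑ i, y i * fderiv ℝ g (t • y) (EuclideanSpace.single i (1:ℝ)) := by
      generalize fderiv ℝ g (t • y) = L
      conv_lhs => rw [← (EuclideanSpace.basisFun (Fin n) ℝ).sum_repr y]
      simp
    rw [this, Finset.sum_mul]
    exact Finset.sum_congr rfl fun i _ => by ring
  simp only [l1]
  rw [integral_finsetSum]
  · simp only [key, lap, Finset.sum_mul]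
    rw [integral_finsetSum]
    · rw [Finset.mul_sum]
      refine Finset.sum_congr rfl fun i _ => ?_
      simp only [mul_assoc]
      rw [integral_const_mul]; ring
    · intro i _
      exact Continuous.integrable_of_hasCompactSupport (((hc i).comp hcs).mul psi_cont) psi_supp.mul_left
  · intro i _
    have hci : Continuous (fun y : E => y i) := by fun_prop
    exact Continuous.integrable_of_hasCompactSupport (((hdi i).continuous.comp hcs).mul (phi_cont.mul hci)) (phi_supp.mul_right.mul_left)


lemma mv0 (g : E → ℝ) (hg : ContDiff ℝ 2 g) (hl : ∀ y : E, ‖y‖ < 1 → lap g y = 0) :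
    ∫ y : E, g y * phi y = g 0 * ∫ y : E, phi y := by
  have hd : ContDiff ℝ 1 (fderiv ℝ g) := hg.fderiv_right (by norm_num)
  have hz (t : ℝ) (ht0 : 0 ≤ t) (ht : t < 1) : ∫ y : E, fderiv ℝ g (t • y) y * phi y = 0 := by
    rw [mv_deriv g hg]
    have : ∀ y : E, lap g (t • y) * psi y = 0 := by
      intro y
      rcases lt_or_ge ‖y‖ 1 with h | h
      · rw [hl _ (by rw [norm_smul, Real.norm_of_nonneg ht0]; nlinarith [norm_nonneg y]), zero_mul]
      · rw [psi_zero h, mul_zero]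
    simp [this]
  obtain ⟨M, hM⟩ := (isCompact_closedBall (0 : E) 3).exists_bound_of_continuousOn hd.continuous.continuousOn
  have hderiv (t : ℝ) (ht : t ∈ Set.Icc (0:ℝ) 1) : HasDerivAt (fun t : ℝ => ∫ y : E, g (t • y) * phi y)
      (∫ y : E, fderiv ℝ g (t • y) y * phi y) t := by
    refine (hasDerivAt_integral_of_dominated_loc_of_deriv_le (𝕜 := ℝ)
      (F := fun (t : ℝ) (y : E) => g (t • y) * phi y)
      (F' := fun (t : ℝ) (y : E) => fderiv ℝ g (t • y) y * phi y) (s := Metric.ball t 1)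
      (bound := fun y => M * phi y)
      (Metric.ball_mem_nhds t one_pos) ?_ ?_ ?_ ?_ ?_ ?_).2
    · refine Eventually.of_forall fun s => Continuous.aestronglyMeasurable ?_
      exact (hg.continuous.comp (by fun_prop)).mul phi_cont
    · exact Continuous.integrable_of_hasCompactSupport ((hg.continuous.comp (by fun_prop)).mul phi_cont) phi_supp.mul_left
    · refine Continuous.aestronglyMeasurable ?_
      exact ((hd.continuous.comp (by fun_prop)).clm_apply continuous_id).mul phi_cont
    · refine Eventually.of_forall fun y s hs => ?_
      rcases lt_or_ge ‖y‖ 1 with h | h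
      · rw [norm_mul, Real.norm_of_nonneg (phi_nonneg y)]
        refine mul_le_mul_of_nonneg_right ?_ (phi_nonneg y)
        have hs2 : ‖s‖ ≤ 3 := by
          rw [Metric.mem_ball, Real.dist_eq, abs_lt] at hs
          rw [Real.norm_eq_abs, abs_le]; constructor <;> linarith [hs.1, hs.2, ht.1, ht.2]
        have hm := hM (s • y) (by
          rw [mem_closedBall_zero_iff, norm_smul]; nlinarith [norm_nonneg y, norm_nonneg s])
        calc ‖fderiv ℝ g (s • y) y‖ ≤ ‖fderiv ℝ g (s • y)‖ * ‖y‖ := ContinuousLinearMap.le_opNorm _ _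
          _ ≤ M * 1 := mul_le_mul hm h.le (norm_nonneg _) ((norm_nonneg _).trans hm)
          _ = M := mul_one _
      · simp [phi_zero h]
    · exact (phi_cont.integrable_of_hasCompactSupport phi_supp).const_mul _
    · refine Eventually.of_forall fun y s hs => ?_
      have h1 := ((hg.differentiable (by norm_num)) (s • y)).hasFDerivAt
      have h2 : HasDerivAt (fun s : ℝ => s • y) ((1:ℝ) • y) s := (hasDerivAt_id s).smul_const y
      rw [one_smul] at h2
      exact (h1.comp_hasDerivAt s h2).mul_const _
  have := constant_of_has_deriv_right_zero (a := (0:ℝ)) (b := 1) (f := fun t : ℝ => ∫ y : E, g (t • y) * phi y)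
    (fun t ht => (hderiv t ht).continuousAt.continuousWithinAt)
    (fun t ht => by
      have := hderiv t ⟨ht.1, ht.2.le⟩
      rw [hz t ht.1 ht.2] at this
      exact this.hasDerivWithinAt) 1 (by simp)
  simp only [one_smul, zero_smul] at this
  rw [this, integral_const_mul]

lemma lap_affine (f : E → ℝ) (x : E) (R : ℝ) (hf : ContDiff ℝ 2 f) (y : E) :
    lap (fun y => f (x + R • y)) y = R ^ 2 * lap f (x + R • y) := by
  have hd : ContDiff ℝ 1 (fderiv ℝ f) := hf.fderiv_right (by norm_num)
  have h2 (y : E) : HasFDerivAt (fun y : E => x + R • y) (R • ContinuousLinearMap.id ℝ E) y :=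
    ((hasFDerivAt_id y).const_smul R).const_add x
  unfold lap
  rw [Finset.mul_sum]
  refine Finset.sum_congr rfl fun i _ => ?_
  have e1 (y : E) : fderiv ℝ (fun y => f (x + R • y)) y (EuclideanSpace.single i (1:ℝ)) =
      R * fderiv ℝ f (x + R • y) (EuclideanSpace.single i (1:ℝ)) := by
    have h3 := ((hf.differentiable (by norm_num)) (x + R • y)).hasFDerivAt.comp y (h2 y)
    have h4 : HasFDerivAt (fun y => f (x + R • y)) _ y := h3
    rw [h4.fderiv]
    simp
  simp only [e1]
  have hdi : ContDiff ℝ 1 (fun y => fderiv ℝ f y (EuclideanSpace.single i (1:ℝ))) :=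
    hd.clm_apply contDiff_const
  have h3 := (((hdi.differentiable (by norm_num)) (x + R • y)).hasFDerivAt.comp y (h2 y)).const_mul R
  have h4 : HasFDerivAt (fun y => R * fderiv ℝ f (x + R • y) (EuclideanSpace.single i (1:ℝ))) _ y := h3
  rw [h4.fderiv]
  simp
  ring

lemma mv (f : E → ℝ) (hf : ContDiff ℝ 2 f) (x : E) (R : ℝ) (hR : 0 < R)
    (hl : ∀ y : E, dist y x < R → lap f y = 0) :
    ∫ z : E, f z * phi (R⁻¹ • (z - x)) = R ^ n * (f x * ∫ y : E, phi y) := by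
  have h := mv0 (fun y => f (x + R • y)) (hf.comp (by fun_prop)) (fun y hy => by
    rw [lap_affine f x R hf, hl, mul_zero]
    rw [dist_eq_norm, add_sub_cancel_left, norm_smul, Real.norm_of_nonneg hR.le]
    nlinarith)
  simp only [smul_zero, add_zero] at h
  rw [← h]
  have h1 : ∫ z : E, f z * phi (R⁻¹ • (z - x)) = ∫ z : E, f (x + z) * phi (R⁻¹ • z) := by
    rw [← integral_add_left_eq_self _ x]
    simp
  have h2 := Measure.integral_comp_inv_smul (volume : Measure E) (fun y => f (x + R • y) * phi y) R
  simp only [smul_inv_smul₀ hR.ne', finrank_euclideanSpace_fin] at h2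
  rw [h1, h2, abs_of_nonneg (by positivity), smul_eq_mul]

lemma harnack0 (f : E → ℝ) (hf : ContDiff ℝ 2 f) (x x' : E) (R : ℝ) (hR : 0 < R)
    (hl : ∀ y : E, dist y x' < 2 * R → lap f y = 0)
    (hp : ∀ y : E, dist y x' < 2 * R → 0 ≤ f y)
    (hx : dist x x' ≤ R / 2) :
    f x ≤ 16 / 7 * 2 ^ n * f x' := by
  have m1 := mv f hf x R hR (fun y hy => hl y (by linarith [dist_triangle y x x']))
  have m2 := mv f hf x' (2 * R) (by linarith) hl
  have hc (x : E) (R : ℝ) (hR : 0 < R) : Integrable (fun z : E => f z * phi (R⁻¹ • (z - x))) := by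
    refine Continuous.integrable_of_hasCompactSupport (hf.continuous.mul (phi_cont.comp (by fun_prop))) ?_
    refine HasCompactSupport.mul_left (f := f) (f' := fun z => phi (R⁻¹ • (z - x))) ?_
    refine HasCompactSupport.intro (isCompact_closedBall x R) fun y hy => phi_zero ?_
    rw [Metric.mem_closedBall, not_le, dist_eq_norm] at hy
    rw [norm_smul, norm_inv, Real.norm_of_nonneg hR.le, ← div_eq_inv_mul, one_le_div hR]
    exact hy.le
  have hle : ∫ z : E, f z * phi (R⁻¹ • (z - x)) ≤ ∫ z : E, 16 / 7 * (f z * phi ((2 * R)⁻¹ • (z - x'))) := by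
    refine integral_mono (hc x R hR) ((hc x' (2 * R) (by linarith)).const_mul _) fun z => ?_
    show f z * phi (R⁻¹ • (z - x)) ≤ 16 / 7 * (f z * phi ((2 * R)⁻¹ • (z - x')))
    rcases lt_or_ge (dist z x) R with h | h
    · have h3 : dist z x' ≤ 3 / 2 * R := by linarith [dist_triangle z x x']
      have h4 : 7 / 16 ≤ phi ((2 * R)⁻¹ • (z - x')) := by
        refine le_trans ?_ (le_max_left _ _)
        have : ‖(2 * R)⁻¹ • (z - x')‖ ≤ 3 / 4 := by
          rw [norm_smul, norm_inv, Real.norm_of_nonneg (by linarith), ← div_eq_inv_mul, div_le_iff₀ (by linarith), ← dist_eq_norm]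
          linarith
        nlinarith [norm_nonneg ((2 * R)⁻¹ • (z - x'))]
      have h5 := hp z (by linarith)
      have h6 := phi_le_one (R⁻¹ • (z - x))
      nlinarith [mul_le_mul_of_nonneg_left h6 h5, mul_le_mul_of_nonneg_left h4 h5]
    · rw [phi_zero (y := R⁻¹ • (z - x))]
      · rcases lt_or_ge (dist z x') (2 * R) with h' | h'
        · have := mul_nonneg (hp z h') (phi_nonneg ((2 * R)⁻¹ • (z - x')))
          linarith
        · rw [phi_zero (y := (2 * R)⁻¹ • (z - x'))]
          · simp
          · rw [norm_smul, norm_inv, Real.norm_of_nonneg (by linarith), ← div_eq_inv_mul, one_le_div (by linarith), ← dist_eq_norm]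
            exact h'
      · rw [norm_smul, norm_inv, Real.norm_of_nonneg hR.le, ← div_eq_inv_mul, one_le_div hR, ← dist_eq_norm]
        exact h
  rw [integral_const_mul, m1, m2, mul_pow] at hle
  have hI := phi_int_pos (n := n)
  have hRn : 0 < R ^ n := by positivity
  have : (R ^ n * ∫ y : E, phi y) * f x ≤ (R ^ n * ∫ y : E, phi y) * (16 / 7 * 2 ^ n * f x') := by
    linarith
  exact le_of_mul_le_mul_left this (by positivity)

end

section
variable {n : ℕ}
local notation "E" => EuclideanSpace ℝ (Fin n)

lemma two_le_top' : (1 + 1 : WithTop ℕ∞) ≤ ((⊤ : ℕ∞) : WithTop ℕ∞) := by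
  have : (1 + 1 : WithTop ℕ∞) = (((1 + 1 : ℕ∞)) : WithTop ℕ∞) := rfl
  rw [this]
  exact WithTop.coe_le_coe.2 le_top

lemma lap_congr {f g : E → ℝ} {x : E} (h : f =ᶠ[nhds x] g) : lap f x = lap g x := by
  unfold lap
  refine Finset.sum_congr rfl fun i _ => ?_
  have h1 : (fun y => fderiv ℝ f y (EuclideanSpace.single i (1:ℝ))) =ᶠ[nhds x]
      (fun y => fderiv ℝ g y (EuclideanSpace.single i (1:ℝ))) := by
    filter_upwards [h.fderiv (𝕜 := ℝ)] with y hy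
    rw [hy]
  rw [h1.fderiv_eq]

lemma HarmonicOnSet.contDiffAt {f : E → ℝ} (hf : HarmonicOnSet f {(0:E)}ᶜ) {x : E} (hx : x ≠ 0) :
    ContDiffAt ℝ (⊤ : ℕ∞) f x :=
  hf.1.contDiffAt (isOpen_compl_singleton.mem_nhds hx)

lemma harnack1 (f : E → ℝ) (hf : HarmonicOnSet f {(0:E)}ᶜ) (x x' : E) (R : ℝ) (hR : 0 < R)
    (hx' : 3 * R < ‖x'‖)
    (hp : ∀ y : E, dist y x' < 2 * R → 0 ≤ f y)
    (hx : dist x x' ≤ R / 2) :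
    f x ≤ 16 / 7 * 2 ^ n * f x' := by
  let b : ContDiffBump x' := ⟨2 * R, 3 * R, by linarith, by linarith⟩
  have hb (y : E) (hy : dist y x' < 2 * R) : b y = 1 := b.one_of_mem_closedBall (by
    rw [Metric.mem_closedBall]; exact hy.le)
  have hg : ContDiff ℝ 2 (fun y => b y * f y) := by
    rw [contDiff_iff_contDiffAt]
    intro y
    rcases eq_or_ne y 0 with h | h
    · subst h
      have : (fun y => b y * f y) =ᶠ[nhds 0] fun _ => 0 := by
        have : (0:E) ∈ (tsupport b)ᶜ := by
          rw [b.tsupport_eq, Set.mem_compl_iff, Metric.mem_closedBall, dist_zero_left, not_le]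
          exact hx'
        filter_upwards [(isClosed_tsupport b).isOpen_compl.mem_nhds this] with y hy
        rw [image_eq_zero_of_notMem_tsupport hy, zero_mul]
      exact contDiffAt_const.congr_of_eventuallyEq this
    · exact b.contDiffAt.mul ((hf.contDiffAt h).of_le (by exact_mod_cast le_top))
  have h := harnack0 (fun y => b y * f y) hg x x' R hR (fun y hy => ?_) (fun y hy => ?_) hx
  · rwa [hb x (by linarith), hb x' (by simp; linarith), one_mul, one_mul] at h
  · have : (fun y => b y * f y) =ᶠ[nhds y] f := by
      filter_upwards [Metric.isOpen_ball.mem_nhds (Metric.mem_ball.2 hy)] with z hz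
      rw [hb z hz, one_mul]
    rw [lap_congr this]
    refine hf.2 y ?_
    rintro rfl
    rw [dist_zero_left] at hy
    linarith
  · rw [hb y hy, one_mul]; exact hp y hy

lemma HarmonicOnSet.add {f g : E → ℝ} (hf : HarmonicOnSet f {(0:E)}ᶜ) (hg : HarmonicOnSet g {(0:E)}ᶜ) :
    HarmonicOnSet (fun x => f x + g x) {(0:E)}ᶜ := by
  refine ⟨hf.1.add hg.1, fun x hx => ?_⟩
  have h00 := congrArg₂ (· + ·) (hf.2 x hx) (hg.2 x hx)
  simp only [add_zero] at h00
  rw [← h00, ← Finset.sum_add_distrib]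
  refine Finset.sum_congr rfl fun i _ => ?_
  have d {f : E → ℝ} (hf : HarmonicOnSet f {(0:E)}ᶜ) : DifferentiableAt ℝ (fun y => fderiv ℝ f y (EuclideanSpace.single i (1:ℝ))) x := by
    have : ContDiffAt ℝ 1 (fderiv ℝ f) x := (hf.contDiffAt hx).fderiv_right two_le_top'
    exact (this.clm_apply contDiffAt_const).differentiableAt (by norm_num)
  have : (fun y => fderiv ℝ (fun x => f x + g x) y (EuclideanSpace.single i (1:ℝ))) =ᶠ[nhds x]
     fun y => fderiv ℝ f y (EuclideanSpace.single i (1:ℝ)) + fderiv ℝ g y (EuclideanSpace.single i (1:ℝ)) := by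
    filter_upwards [isOpen_compl_singleton.mem_nhds hx] with y hy
    rw [fderiv_fun_add ((hf.contDiffAt hy).differentiableAt (by simp)) ((hg.contDiffAt hy).differentiableAt (by simp))]
    rfl
  rw [this.fderiv_eq, fderiv_fun_add (d hf) (d hg)]
  rfl

lemma HarmonicOnSet.const_mul {f : E → ℝ} (hf : HarmonicOnSet f {(0:E)}ᶜ) (c : ℝ) :
    HarmonicOnSet (fun x => c * f x) {(0:E)}ᶜ := by
  refine ⟨contDiffOn_const.mul hf.1, fun x hx => ?_⟩
  have h00 := congrArg (c * ·) (hf.2 x hx)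
  simp only [mul_zero] at h00
  rw [← h00, Finset.mul_sum]
  refine Finset.sum_congr rfl fun i _ => ?_
  have d : DifferentiableAt ℝ (fun y => fderiv ℝ f y (EuclideanSpace.single i (1:ℝ))) x := by
    have : ContDiffAt ℝ 1 (fderiv ℝ f) x := (hf.contDiffAt hx).fderiv_right two_le_top'
    exact (this.clm_apply contDiffAt_const).differentiableAt (by norm_num)
  have : (fun y => fderiv ℝ (fun x => c * f x) y (EuclideanSpace.single i (1:ℝ))) =ᶠ[nhds x]
     fun y => c * fderiv ℝ f y (EuclideanSpace.single i (1:ℝ)) := by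
    filter_upwards [isOpen_compl_singleton.mem_nhds hx] with y hy
    rw [fderiv_const_mul ((hf.contDiffAt hy).differentiableAt (by simp))]
    rfl
  rw [this.fderiv_eq, fderiv_const_mul d]
  rfl

lemma harmonic_const (c : ℝ) : HarmonicOnSet (fun _ : E => c) {(0:E)}ᶜ := by
  refine ⟨contDiffOn_const, fun x hx => ?_⟩
  simp

noncomputable def gker (x : E) : ℝ := ‖x‖ ^ ((2 : ℝ) - n)

lemma hasFDerivAt_norm_rpow' (p : ℝ) {x : E} (hx : x ≠ 0) :
    HasFDerivAt (fun y : E => ‖y‖ ^ p) ((p * ‖x‖ ^ (p - 2)) • innerSL ℝ x) x := by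
  have h0 : 0 < ‖x‖ := norm_pos_iff.2 hx
  have h1 := (hasStrictFDerivAt_norm_sq x).hasFDerivAt
  have h2 := h1.rpow_const (p := p / 2) (Or.inl (by positivity))
  have e (y : E) (q : ℝ) : (‖y‖ ^ 2) ^ (q / 2) = ‖y‖ ^ q := by
    rw [← Real.rpow_natCast, ← Real.rpow_mul (norm_nonneg y)]
    congr 1; push_cast; ring
  simp only [e] at h2
  refine h2.congr_fderiv ?_
  have : p / 2 - 1 = (p - 2) / 2 := by ring
  rw [this, e]
  ext v
  simp
  ring

lemma harmonic_gker : HarmonicOnSet (gker : E → ℝ) {(0:E)}ᶜ := by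
  constructor
  · intro x hx
    exact (((contDiffAt_norm ℝ hx).rpow_const_of_ne (norm_ne_zero_iff.2 hx))).contDiffWithinAt
  · intro x hx
    set p : ℝ := 2 - n with hp
    have h0 : 0 < ‖x‖ := norm_pos_iff.2 hx
    have key (i : Fin n) : fderiv ℝ (fun y => fderiv ℝ (gker : E → ℝ) y (EuclideanSpace.single i (1:ℝ))) x
        (EuclideanSpace.single i (1:ℝ)) = p * (p - 2) * ‖x‖ ^ (p - 4) * (x i) ^ 2 + p * ‖x‖ ^ (p - 2) := by
      have h1 : (fun y => fderiv ℝ (gker : E → ℝ) y (EuclideanSpace.single i (1:ℝ))) =ᶠ[nhds x]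
         fun y => (p * ‖y‖ ^ (p - 2)) * y i := by
        filter_upwards [isOpen_compl_singleton.mem_nhds hx] with y hy
        have : HasFDerivAt (gker : E → ℝ) _ y := hasFDerivAt_norm_rpow' p hy
        rw [this.fderiv]
        simp [EuclideanSpace.inner_single_right]
      have h2 : HasFDerivAt (fun y : E => y i) (EuclideanSpace.proj i : E →L[ℝ] ℝ) x :=
        (EuclideanSpace.proj i : E →L[ℝ] ℝ).hasFDerivAt
      have h3 : HasFDerivAt (fun y : E => (p * ‖y‖ ^ (p - 2)) * y i) _ x :=
        ((hasFDerivAt_norm_rpow' (p - 2) hx).const_mul p).mul h2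
      rw [h1.fderiv_eq, h3.fderiv]
      simp [EuclideanSpace.inner_single_right]
      rw [show p - 2 - 2 = p - 4 by ring]
      ring
    simp only [key]
    rw [Finset.sum_add_distrib, ← Finset.mul_sum, ← EuclideanSpace.real_norm_sq_eq]
    simp only [Finset.sum_const, Finset.card_univ, Fintype.card_fin, nsmul_eq_mul]
    have : ‖x‖ ^ (p - 2) = ‖x‖ ^ (p - 4) * ‖x‖ ^ 2 := by
      rw [← Real.rpow_natCast, ← Real.rpow_add h0]; congr 1; push_cast; ring
    rw [this, hp]
    ring

lemma maxp (h : E → ℝ) (hh : HarmonicOnSet h {(0:E)}ᶜ)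
    (hlim : Tendsto h (comap (fun x : E => ‖x‖) atTop) (nhds 0)) (r : ℝ) (hr : 0 < r)
    (hb : ∀ x : E, ‖x‖ = r → 0 ≤ h x) (x : E) (hx : r ≤ ‖x‖) : 0 ≤ h x := by
  by_contra! hneg
  have hev := hlim.eventually (eventually_gt_nhds hneg)
  rw [eventually_comap] at hev
  obtain ⟨R0, hR0⟩ := eventually_atTop.1 hev
  have hcont : ContinuousOn h {y : E | r ≤ ‖y‖} := fun y hy =>
    (hh.contDiffAt (norm_pos_iff.1 (hr.trans_le hy))).continuousAt.continuousWithinAt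
  set R1 := max R0 ‖x‖
  set K : Set E := Metric.closedBall 0 R1 ∩ {y : E | r ≤ ‖y‖} with hK
  have hKc : IsCompact K := (isCompact_closedBall _ _).inter_right (isClosed_le continuous_const continuous_norm)
  have hKcont : ContinuousOn h K := hcont.mono Set.inter_subset_right
  have hxK : x ∈ K := ⟨by simp [R1], hx⟩
  obtain ⟨x1, hx1K, hx1⟩ := hKc.exists_isMinOn ⟨x, hxK⟩ hKcont
  have hx1x : h x1 ≤ h x := hx1 hxK
  have hout (z : E) (hz : r ≤ ‖z‖) (hzK : z ∉ K) : h x < h z := by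
    refine hR0 ‖z‖ ?_ z rfl
    by_contra! hc
    exact hzK ⟨by simp [R1, hc.le], hz⟩
  have hmin (z : E) (hz : r ≤ ‖z‖) : h x1 ≤ h z := by
    by_cases hzK : z ∈ K
    · exact hx1 hzK
    · linarith [hout z hz hzK]
  obtain ⟨x2, ⟨hx2K, hx2e⟩, hx2⟩ := (hKcont.preimage_isClosed_of_isClosed hKc.isClosed (isClosed_singleton (x := h x1)) |> fun hcl =>
    (hKc.of_isClosed_subset hcl Set.inter_subset_left)).exists_isMaxOn ⟨x1, hx1K, rfl⟩ continuous_norm.continuousOn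
  have hx2e : h x2 = h x1 := hx2e
  have hx2r : r < ‖x2‖ := by
    refine lt_of_le_of_ne hx2K.2 fun he => ?_
    linarith [hb x2 he.symm]
  have hx20 : 0 < ‖x2‖ := hr.trans hx2r
  set R := (‖x2‖ - r) / 4 with hR
  have hRpos : 0 < R := by rw [hR]; linarith
  set z := (1 + R / 2 / ‖x2‖) • x2 with hz
  have hzn : ‖z‖ = ‖x2‖ + R / 2 := by
    rw [hz, norm_smul, Real.norm_of_nonneg (by positivity), add_mul, one_mul, div_mul_cancel₀ _ hx20.ne']
  have hzd : dist z x2 ≤ R / 2 := by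
    rw [dist_eq_norm, hz, add_smul, one_smul, add_sub_cancel_left, norm_smul, Real.norm_of_nonneg (by positivity), div_mul_cancel₀ _ hx20.ne']
  have hH := harnack1 (fun y => h y + (- h x1)) (hh.add (harmonic_const _)) z x2 R hRpos (by rw [hR]; linarith)
    (fun y hy => by
      have : r ≤ ‖y‖ := by
        have := norm_sub_norm_le x2 y
        rw [dist_comm, dist_eq_norm] at hy
        linarith
      linarith [hmin y this]) hzd
  simp only [hx2e, add_neg_cancel, mul_zero] at hH
  have hzr : r ≤ ‖z‖ := by linarith
  have hze : h z = h x1 := le_antisymm (by linarith) (hmin z hzr)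
  have hzK : z ∈ K := by
    by_contra hc
    linarith [hout z hzr hc]
  have : ‖z‖ ≤ ‖x2‖ := hx2 (show z ∈ K ∩ h ⁻¹' {h x1} from ⟨hzK, hze⟩)
  linarith

lemma harnack_seg (f : E → ℝ) (hf : HarmonicOnSet f {(0:E)}ᶜ) (hp : ∀ x : E, x ≠ 0 → 0 ≤ f x)
    (x y : E) (r : ℝ) (hr : 0 < r) (hx : ‖x‖ = r) (hy : ‖y‖ = r) (hxy : 0 ≤ inner ℝ x y) :
    f x ≤ (16 / 7 * 2 ^ n) ^ 20 * f y := by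
  let P : ℝ → E := fun s => x + s • (y - x)
  have hPn (s : ℝ) (h0 : 0 ≤ s) (h1 : s ≤ 1) : 3 * (r / 5) < ‖P s‖ := by
    have : P s = (1 - s) • x + s • y := by simp only [P]; module
    have h2 : ‖P s‖ ^ 2 = (1 - s) ^ 2 * r ^ 2 + 2 * ((1 - s) * s * inner ℝ x y) + s ^ 2 * r ^ 2 := by
      rw [this, norm_add_sq_real, norm_smul, norm_smul, hx, hy, inner_smul_left, inner_smul_right, mul_pow, mul_pow]
      simp
      ring
    have h3 : 0 ≤ (1 - s) * s * inner ℝ x y := by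
      have : 0 ≤ 1 - s := by linarith
      positivity
    have h4 : (1 / 2) * r ^ 2 ≤ ((1 - s) ^ 2 + s ^ 2) * r ^ 2 :=
      mul_le_mul_of_nonneg_right (by nlinarith [sq_nonneg (1 - 2 * s)]) (by positivity)
    refine lt_of_pow_lt_pow_left₀ 2 (norm_nonneg _) ?_
    nlinarith
  have key (k : ℕ) (hk : k ≤ 20) : f x ≤ (16 / 7 * 2 ^ n) ^ k * f (P (k / 20)) := by
    induction k with
    | zero => simp [P]
    | succ k ih =>
      have ih := ih (by omega)
      have hk' : ((k + 1 : ℕ) : ℝ) ≤ 20 := by exact_mod_cast hk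
      have hn1 := hPn ((k + 1 : ℕ) / 20) (by positivity) (by rw [div_le_one (by norm_num)]; exact hk')
      have := harnack1 f hf (P (k / 20)) (P ((k + 1 : ℕ) / 20)) (r / 5) (by positivity) hn1
        (fun z hz => hp z (by
          rintro rfl
          rw [dist_zero_left] at hz
          linarith)) (by
        have e : P (k / 20) - P ((k + 1 : ℕ) / 20) = (1 / 20 : ℝ) • (x - y) := by
          simp only [P]; push_cast; module
        rw [dist_eq_norm, e, norm_smul]
        have := norm_sub_le x y
        rw [hx, hy] at this
        norm_num
        linarith)
      calc f x ≤ _ := ih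
        _ ≤ (16 / 7 * 2 ^ n) ^ k * ((16 / 7 * 2 ^ n) * f (P ((k + 1 : ℕ) / 20))) :=
          mul_le_mul_of_nonneg_left this (by positivity)
        _ = _ := by ring
  have := key 20 le_rfl
  simpa [P] using this

lemma harnack_sphere (hn : 3 ≤ n) (f : E → ℝ) (hf : HarmonicOnSet f {(0:E)}ᶜ) (hp : ∀ x : E, x ≠ 0 → 0 ≤ f x)
    (x y : E) (r : ℝ) (hr : 0 < r) (hx : ‖x‖ = r) (hy : ‖y‖ = r) :
    f x ≤ (16 / 7 * 2 ^ n) ^ 40 * f y := by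
  classical
  obtain ⟨w, hw, hxw, hyw⟩ : ∃ w : E, w ≠ 0 ∧ inner ℝ x w = 0 ∧ inner ℝ y w = 0 := by
    set S := Submodule.span ℝ ({x, y} : Set E) with hS
    have h1 : Module.finrank ℝ S ≤ 2 := by
      have := finrank_span_finset_le_card (R := ℝ) ({x, y} : Finset E)
      simp only [Finset.coe_insert, Finset.coe_singleton] at this
      exact this.trans Finset.card_le_two
    have h2 := Submodule.finrank_add_finrank_orthogonal S
    rw [finrank_euclideanSpace_fin] at h2
    have h3 : Sᗮ ≠ ⊥ := by
      intro h
      rw [h, finrank_bot] at h2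
      omega
    obtain ⟨w, hw, hw0⟩ := Submodule.exists_mem_ne_zero_of_ne_bot h3
    rw [Submodule.mem_orthogonal] at hw
    exact ⟨w, hw0, hw x (Submodule.subset_span (by simp)), hw y (Submodule.subset_span (by simp))⟩
  have hw0 : 0 < ‖w‖ := norm_pos_iff.2 hw
  set z := (r / ‖w‖) • w with hz
  have hzn : ‖z‖ = r := by rw [hz, norm_smul, Real.norm_of_nonneg (by positivity), div_mul_cancel₀ _ hw0.ne']
  have h1 := harnack_seg f hf hp x z r hr hx hzn (by rw [hz, inner_smul_right, hxw, mul_zero])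
  have h2 := harnack_seg f hf hp z y r hr hzn hy (by rw [hz, real_inner_comm, inner_smul_right, hyw, mul_zero])
  calc f x ≤ _ := h1
    _ ≤ (16 / 7 * 2 ^ n) ^ 20 * ((16 / 7 * 2 ^ n) ^ 20 * f y) := mul_le_mul_of_nonneg_left h2 (by positivity)
    _ = _ := by ring

lemma gker_pos {x : E} (hx : x ≠ 0) : 0 < gker x := Real.rpow_pos_of_pos (norm_pos_iff.2 hx) _

lemma gker_lim (hn : 3 ≤ n) : Tendsto (gker : E → ℝ) (comap (fun x : E => ‖x‖) atTop) (nhds 0) := by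
  have h3 : (3:ℝ) ≤ n := by exact_mod_cast hn
  have := tendsto_rpow_neg_atTop (y := (n:ℝ) - 2) (by linarith)
  have h2 := this.comp (tendsto_comap (f := fun x : E => ‖x‖))
  refine h2.congr fun x => ?_
  simp [gker]


lemma gker_norm {x y : E} (h : ‖x‖ = ‖y‖) : gker x = gker y := by unfold gker; rw [h]

end

/-- a positive harmonic function on `ℝⁿ ∖ {0}`, `n ≥ 3`, tending to `1`
at infinity is of the form `U(x) = 1 + b·‖x‖^{2-n}` with `b ≥ 0`. -/
theorem positive_harmonic_punctured_classification
    (n : ℕ) (hn : 3 ≤ n)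
    (U : EuclideanSpace ℝ (Fin n) → ℝ)
    (hpos : ∀ x : EuclideanSpace ℝ (Fin n), x ≠ 0 → 0 < U x)
    (hharm : HarmonicOnSet U {(0 : EuclideanSpace ℝ (Fin n))}ᶜ)
    (hlim : Tendsto U (comap (fun x : EuclideanSpace ℝ (Fin n) => ‖x‖) atTop)
      (nhds 1)) :
    ∃ b : ℝ, 0 ≤ b ∧ ∀ x : EuclideanSpace ℝ (Fin n), x ≠ 0 →
      U x = 1 + b * ‖x‖ ^ ((2 : ℝ) - n) := by
  have hlim0 : Tendsto (fun x => U x + (-1)) (comap (fun x : EuclideanSpace ℝ (Fin n) => ‖x‖) atTop)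
      (nhds 0) := by
    have := hlim.add_const (-1)
    rwa [add_neg_cancel] at this
  have hv := hharm.add (harmonic_const (-1))
  have h3 : (3:ℝ) ≤ n := by exact_mod_cast hn
  -- `U ≥ 1`
  have hv0 (x : EuclideanSpace ℝ (Fin n)) (hx : x ≠ 0) : 0 ≤ U x + (-1) := by
    have hx0 : 0 < ‖x‖ := norm_pos_iff.2 hx
    have key (r : ℝ) (hr : 0 < r) (hrx : r ≤ ‖x‖) : 0 ≤ U x + (-1) + r ^ ((n:ℝ) - 2) * gker x := by
      refine maxp (fun x => U x + (-1) + r ^ ((n:ℝ) - 2) * gker x) (hv.add (harmonic_gker.const_mul _)) ?_ r hr ?_ x hrx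
      · simpa using hlim0.add ((gker_lim hn).const_mul (r ^ ((n:ℝ) - 2)))
      · intro y hy
        have h1 : r ^ ((n:ℝ) - 2) * gker y = 1 := by
          unfold gker
          rw [hy, ← Real.rpow_add hr]
          simp
        rw [h1]
        have := hpos y (norm_pos_iff.1 (by rw [hy]; exact hr))
        linarith
    have ht : Tendsto (fun r : ℝ => U x + (-1) + r ^ ((n:ℝ) - 2) * gker x) (nhdsWithin 0 (Set.Ioi 0))
        (nhds (U x + (-1) + 0 * gker x)) := by
      have : ContinuousAt (fun r : ℝ => r ^ ((n:ℝ) - 2)) 0 :=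
        Real.continuousAt_rpow_const _ _ (Or.inr (by linarith))
      have h1 : Tendsto (fun r : ℝ => r ^ ((n:ℝ) - 2)) (nhds 0) (nhds 0) := by
        have h2 := this.tendsto
        rwa [Real.zero_rpow (by linarith)] at h2
      exact ((h1.mono_left nhdsWithin_le_nhds).mul_const _).const_add _
    rw [zero_mul, add_zero] at ht
    refine ge_of_tendsto ht ?_
    filter_upwards [Ioo_mem_nhdsGT hx0] with r hr
    exact key r hr.1 hr.2.le
  set S : Set ℝ := (fun x => (U x + (-1)) / gker x) '' {(0 : EuclideanSpace ℝ (Fin n))}ᶜ with hS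
  have hSb : BddBelow S := ⟨0, by
    rintro _ ⟨x, hx, rfl⟩
    exact div_nonneg (hv0 x hx) (gker_pos hx).le⟩
  set b := sInf S with hb
  have hb0 : 0 ≤ b := Real.sInf_nonneg (by
    rintro _ ⟨x, hx, rfl⟩
    exact div_nonneg (hv0 x hx) (gker_pos hx).le)
  refine ⟨b, hb0, fun y hy => ?_⟩
  set w : EuclideanSpace ℝ (Fin n) → ℝ := fun x => U x + (-1) + (-b) * gker x with hw
  have hwh : HarmonicOnSet w {0}ᶜ := hv.add (harmonic_gker.const_mul _)
  have hwlim : Tendsto w (comap (fun x : EuclideanSpace ℝ (Fin n) => ‖x‖) atTop) (nhds 0) := by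
    have := hlim0.add ((gker_lim hn).const_mul (-b))
    rwa [mul_zero, add_zero] at this
  have hw0 (x : EuclideanSpace ℝ (Fin n)) (hx : x ≠ 0) : 0 ≤ w x := by
    have h1 : b ≤ (U x + (-1)) / gker x := csInf_le hSb ⟨x, hx, rfl⟩
    rw [le_div_iff₀ (gker_pos hx)] at h1
    simp only [hw]; linarith
  set C : ℝ := (16 / 7 * 2 ^ n) ^ 40 with hC
  have hC0 : 0 < C := by positivity
  have hgy := gker_pos hy
  have main (ε : ℝ) (hε : 0 < ε) : w y ≤ C * ε * gker y := by
    obtain ⟨_, ⟨x, hx, rfl⟩, hxε⟩ := exists_lt_of_csInf_lt (s := S) (b := b + ε)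
      ⟨_, y, hy, rfl⟩ (by linarith)
    have hgx : 0 < gker x := gker_pos hx
    have hx0 : 0 < ‖x‖ := norm_pos_iff.2 hx
    have hwx : w x ≤ ε * gker x := by
      simp only [] at hxε
      rw [div_lt_iff₀ hgx] at hxε
      simp only [hw]; linarith
    rcases le_total ‖x‖ ‖y‖ with h | h
    · have := maxp (fun z => C * ε * gker z + (-1) * w z) ((harmonic_gker.const_mul _).add (hwh.const_mul _))
        (by simpa using ((gker_lim hn).const_mul (C * ε)).add (hwlim.const_mul (-1))) ‖x‖ hx0
        (fun z hz => by
          have h1 := harnack_sphere hn w hwh hw0 z x ‖x‖ hx0 hz rfl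
          rw [← hC] at h1
          rw [gker_norm hz]
          have h2 := mul_le_mul_of_nonneg_left hwx hC0.le
          linarith) y h
      linarith
    · have hy0 : 0 < ‖y‖ := norm_pos_iff.2 hy
      have := maxp (fun z => C * w z + (-(w y / gker y)) * gker z) ((hwh.const_mul _).add (harmonic_gker.const_mul _))
        (by simpa using (hwlim.const_mul C).add ((gker_lim hn).const_mul (-(w y / gker y)))) ‖y‖ hy0
        (fun z hz => by
          have h1 := harnack_sphere hn w hwh hw0 y z ‖y‖ hy0 rfl hz
          rw [← hC] at h1
          rw [gker_norm hz, neg_mul, div_mul_cancel₀ _ hgy.ne']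
          linarith) x h
      have h2 := mul_le_mul_of_nonneg_left hwx hC0.le
      have h3 : (w y / gker y) * gker x ≤ (C * ε) * gker x := by linarith
      have h4 := le_of_mul_le_mul_right h3 hgx
      rwa [div_le_iff₀ hgy] at h4
  have hwy : w y ≤ 0 := by
    refine le_of_forall_pos_le_add fun δ hδ => ?_
    have := main (δ / (C * gker y)) (by positivity)
    have e : C * (δ / (C * gker y)) * gker y = δ := by field_simp
    linarith
  have h5 := hw0 y hy
  have h6 : U y + (-1) + (-b) * gker y = 0 := le_antisymm hwy h5
  have h7 : gker y = ‖y‖ ^ ((2 : ℝ) - n) := rfl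
  rw [← h7]
  linarith
end
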